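/- Let n ≥ 1 and 1 < q ≤ 1 + 2/n. Suppose the coefficients a_{ij} are globally bounded on S (i.e. there is M > 0 with |a_{ij}(t,x)| ≤ M for almost all (t,x) ∈ S and all i,j). If (u,v) is an entire weak solution of the inequality u_t − Lu − |u|^{q−1}u ≥ v_t − Lv − |v|^{q−1}v in S such that u ≥ v everywhere in S, then u = v in S. -/

import Mathlib

open MeasureTheory Real

noncomputable section

/-- Euclidean space ℝⁿ. -/
abbrev Xn (n : ℕ) : Type := EuclideanSpace ℝ (Fin n)

/-- Points of the half-space `S = (0,∞) × ℝⁿ`. -/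
abbrev Pt (n : ℕ) : Type := ℝ × Xn n

/-- The half-space `S = (0,∞) × ℝⁿ`. -/
def halfSpace (n : ℕ) : Set (Pt n) := {p | 0 < p.1}

/-- Partial derivative in the time variable. -/
noncomputable def pdT {n : ℕ} (w : Pt n → ℝ) (p : Pt n) : ℝ :=
  fderiv ℝ w p (1, 0)

/-- Partial derivative in the space variable `x_j`. -/
noncomputable def pdX {n : ℕ} (w : Pt n → ℝ) (j : Fin n) (p : Pt n) : ℝ :=
  fderiv ℝ w p (0, EuclideanSpace.single j 1)

/-- The odd power function `x ↦ |x|^{q-1} x`. -/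
noncomputable def oddPow (q x : ℝ) : ℝ := |x| ^ (q - 1) * x

/-- Condition (8): `𝒜(R) ≤ c R^{2-α}` for all `R > 1`, expressed as an a.e. bound
on the majorant `A` over the region `{(t,x) : t > 0, R/2 < |x| < R}`. -/
def Cond8 {n : ℕ} (A : Pt n → ℝ) (α c : ℝ) : Prop :=
  ∀ R : ℝ, 1 < R →
    ∀ᵐ p ∂(volume.restrict
        {p : Pt n | 0 < p.1 ∧ R / 2 < ‖p.2‖ ∧ ‖p.2‖ < R}),
      A p ≤ c * R ^ (2 - α)

/-- `u` is an entire weak solution of `u_t ≥ Lu + |u|^{q−1}u` in `S`. -/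
def WeakSuperSol {n : ℕ} (a : Fin n → Fin n → Pt n → ℝ) (q : ℝ)
    (u : Pt n → ℝ) : Prop :=
  ∀ φ : Pt n → ℝ, ContDiff ℝ (⊤ : ℕ∞) φ → HasCompactSupport φ →
    tsupport φ ⊆ halfSpace n → (∀ p, 0 ≤ φ p) →
    0 ≤ ∫ p in halfSpace n,
        (pdT u p * φ p + ∑ i, ∑ j, a i j p * pdX φ i p * pdX u j p
          - oddPow q (u p) * φ p)

/-- `v` is an entire weak solution of `v_t ≤ Lv + |v|^{q−1}v` in `S`. -/
def WeakSubSol {n : ℕ} (a : Fin n → Fin n → Pt n → ℝ) (q : ℝ)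
    (v : Pt n → ℝ) : Prop :=
  ∀ φ : Pt n → ℝ, ContDiff ℝ (⊤ : ℕ∞) φ → HasCompactSupport φ →
    tsupport φ ⊆ halfSpace n → (∀ p, 0 ≤ φ p) →
    ∫ p in halfSpace n,
        (pdT v p * φ p + ∑ i, ∑ j, a i j p * pdX φ i p * pdX v j p
          - oddPow q (v p) * φ p) ≤ 0

/-- `(u,v)` is an entire weak solution of
`u_t − Lu − |u|^{q−1}u ≥ v_t − Lv − |v|^{q−1}v` in `S`. -/
def WeakSolPair {n : ℕ} (a : Fin n → Fin n → Pt n → ℝ) (q : ℝ)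
    (u v : Pt n → ℝ) : Prop :=
  ∀ φ : Pt n → ℝ, ContDiff ℝ (⊤ : ℕ∞) φ → HasCompactSupport φ →
    tsupport φ ⊆ halfSpace n → (∀ p, 0 ≤ φ p) →
    ∫ p in halfSpace n,
        (pdT u p * φ p + ∑ i, ∑ j, a i j p * pdX φ i p * pdX u j p
          - oddPow q (u p) * φ p) ≥
    ∫ p in halfSpace n,
        (pdT v p * φ p + ∑ i, ∑ j, a i j p * pdX φ i p * pdX v j p
          - oddPow q (v p) * φ p)

open scoped Convolution Topology
open Filter

instance instHaarPt (n : ℕ) : (volume : Measure (Pt n)).IsAddHaarMeasure :=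
  Measure.prod.instIsAddHaarMeasure volume volume

lemma isOpen_halfSpace (n : ℕ) : IsOpen (halfSpace n) :=
  isOpen_lt continuous_const continuous_fst

lemma measurableSet_halfSpace (n : ℕ) : MeasurableSet (halfSpace n) :=
  (isOpen_halfSpace n).measurableSet

lemma locInt_mul {n : ℕ} {f φ : Pt n → ℝ} (hf : LocallyIntegrableOn f (halfSpace n) volume)
    (hφ : ContinuousOn φ (halfSpace n)) (hc : HasCompactSupport φ)
    (hs : tsupport φ ⊆ halfSpace n) : Integrable (fun p => f p * φ p) volume := by
  have h1 : IntegrableOn f (tsupport φ) volume := hf.integrableOn_compact_subset hs hc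
  have h2 : IntegrableOn (fun p => f p * φ p) (tsupport φ) volume :=
    h1.mul_continuousOn (hφ.mono hs) hc
  rwa [integrableOn_iff_integrable_of_support_subset] at h2
  intro p hp
  apply subset_tsupport
  intro h0
  apply hp
  simp [h0]

lemma weak_ext {n : ℕ} (g0 : Pt n → ℝ) (g : Fin n → Pt n → ℝ)
    (h0 : LocallyIntegrableOn g0 (halfSpace n) volume)
    (hg : ∀ i, LocallyIntegrableOn (g i) (halfSpace n) volume)
    (hw : ∀ φ : Pt n → ℝ, ContDiff ℝ (⊤ : ℕ∞) φ → HasCompactSupport φ →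
      tsupport φ ⊆ halfSpace n → (∀ p, 0 ≤ φ p) →
      0 ≤ ∫ p in halfSpace n, (g0 p * φ p + ∑ i, g i p * pdX φ i p))
    (φ : Pt n → ℝ) (hφ : ContDiff ℝ 1 φ) (hc : HasCompactSupport φ)
    (hs : tsupport φ ⊆ halfSpace n) (hpos : ∀ p, 0 ≤ φ p) :
    0 ≤ ∫ p in halfSpace n, (g0 p * φ p + ∑ i, g i p * pdX φ i p) := by
  obtain ⟨δ, hδ, hδs⟩ := IsCompact.exists_cthickening_subset_open hc (isOpen_halfSpace n) hs
  set K := Metric.cthickening δ (tsupport φ) with hK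
  have hKc : IsCompact K := IsCompact.cthickening hc
  let b : ℕ → ContDiffBump (0 : Pt n) := fun k =>
    ⟨δ / (k + 1) / 2, δ / (k + 1), by positivity, by
      have : 0 < δ / (k + 1) := by positivity
      linarith⟩
  have hbout : ∀ k, (b k).rOut ≤ δ := fun k => by
    show δ / (k + 1) ≤ δ
    apply div_le_self hδ.le
    have : (0 : ℝ) ≤ k := Nat.cast_nonneg k
    linarith
  have hb0 : Tendsto (fun k => (b k).rOut) atTop (𝓝 0) := by
    show Tendsto (fun k : ℕ => δ / ((k : ℝ) + 1)) atTop (𝓝 0)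
    exact tendsto_const_div_atTop_nhds_zero_nat δ |>.comp (tendsto_add_atTop_nat 1) |>.congr
      (fun k => by simp)
  let Φ : ℕ → Pt n → ℝ := fun k =>
    ((b k).normed volume ⋆[ContinuousLinearMap.lsmul ℝ ℝ, volume] φ : Pt n → ℝ)
  have hnl : ∀ k, LocallyIntegrable ((b k).normed volume) volume := fun k =>
    ((b k).continuous_normed (μ := volume)).locallyIntegrable
  have hsm : ∀ k, ContDiff ℝ (⊤ : ℕ∞) (Φ k) := fun k =>
    HasCompactSupport.contDiff_convolution_left _ ((b k).hasCompactSupport_normed)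
      (b k).contDiff_normed (hφ.continuous.locallyIntegrable)
  have hsupp : ∀ k, tsupport (Φ k) ⊆ K := by
    intro k
    apply closure_minimal _ Metric.isClosed_cthickening
    refine (support_convolution_subset _).trans ?_
    rw [(b k).support_normed_eq]
    intro x hx
    obtain ⟨y, hy, z, hz, rfl⟩ := hx
    apply Metric.mem_cthickening_of_dist_le _ z _ _ (subset_tsupport _ hz)
    rw [Metric.mem_ball, dist_zero_right] at hy
    rw [dist_eq_norm]
    simpa using hy.le.trans (hbout k)
  have hcs : ∀ k, HasCompactSupport (Φ k) := fun k =>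
    hKc.of_isClosed_subset (isClosed_tsupport _) (hsupp k)
  have hnn : ∀ k p, 0 ≤ Φ k p := by
    intro k p
    apply integral_nonneg
    intro t
    simp only [ContinuousLinearMap.lsmul_apply, smul_eq_mul]
    exact mul_nonneg ((b k).nonneg_normed t) (hpos _)
  have hder : ∀ k i p, pdX (Φ k) i p =
      ((b k).normed volume ⋆[ContinuousLinearMap.lsmul ℝ ℝ, volume] (pdX φ i) : Pt n → ℝ) p := by
    intro k i p
    have h1 := hc.hasFDerivAt_convolution_right (ContinuousLinearMap.lsmul ℝ ℝ) (hnl k) hφ p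
    unfold pdX
    rw [h1.fderiv]
    rw [convolution_precompR_apply _ (hnl k) (hc.fderiv ℝ) (hφ.continuous_fderiv one_ne_zero)]
  have hcX : ∀ i, Continuous (pdX φ i) := fun i =>
    (hφ.continuous_fderiv one_ne_zero).clm_apply continuous_const
  have hcXs : ∀ i, HasCompactSupport (pdX φ i) := fun i => by
    apply (hc.fderiv ℝ).mono
    intro p hp h
    apply hp
    simp [pdX, h]
  have hbd : ∀ f : Pt n → ℝ, Continuous f → HasCompactSupport f → ∃ C, 0 ≤ C ∧ ∀ k p,
      |((b k).normed volume ⋆[ContinuousLinearMap.lsmul ℝ ℝ, volume] f : Pt n → ℝ) p| ≤ C := by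
    intro f hf hfc
    obtain ⟨C, hC⟩ := hf.bounded_above_of_compact_support hfc
    have hC0 : 0 ≤ C := (norm_nonneg _).trans (hC 0)
    refine ⟨3 * C, by positivity, fun k p => ?_⟩
    have := ContDiffBump.dist_normed_convolution_le (φ := b k) (μ := volume) (g := f) (x₀ := p)
      (ε := 2 * C) hf.aestronglyMeasurable (fun x _ => by
        rw [dist_eq_norm]
        have := norm_sub_le (f x) (f p)
        linarith [hC x, hC p])
    rw [Real.dist_eq] at this
    have h2 := hC p
    rw [Real.norm_eq_abs] at h2
    have h3 := abs_le.1 this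
    have h4 := abs_le.1 h2
    rw [abs_le]
    constructor <;> linarith
  obtain ⟨C0, hC00, hC0⟩ := hbd φ hφ.continuous hc
  choose C hCn hC using fun i => hbd (pdX φ i) (hcX i) (hcXs i)
  refine ge_of_tendsto' (f := fun k => ∫ p in halfSpace n,
    (g0 p * Φ k p + ∑ i, g i p * pdX (Φ k) i p)) (b := 0) (x := atTop) ?_
    (fun k => hw (Φ k) (hsm k) (hcs k) ((hsupp k).trans hδs) (hnn k))
  have hcXk : ∀ k i, Continuous (pdX (Φ k) i) := fun k i =>
    ((hsm k).continuous_fderiv (by simp)).clm_apply continuous_const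
  have htX : ∀ k i, tsupport (pdX (Φ k) i) ⊆ tsupport (Φ k) := fun k i => by
    refine (closure_minimal ?_ (isClosed_tsupport _)).trans (tsupport_fderiv_subset ℝ)
    intro p hp
    apply subset_tsupport
    intro h
    apply hp
    simp [pdX, h]
  apply tendsto_integral_of_dominated_convergence
    (K.indicator (fun p => |g0 p| * C0 + ∑ i, |g i p| * C i))
  · intro k
    apply Integrable.aestronglyMeasurable
    apply Integrable.restrict
    apply (locInt_mul h0 (hsm k).continuous.continuousOn (hcs k) ((hsupp k).trans hδs)).add
    apply integrable_finsetSum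
    intro i _
    exact locInt_mul (hg i) (hcXk k i).continuousOn
      ((hcs k).of_isClosed_subset (isClosed_tsupport _) (htX k i))
      ((htX k i).trans ((hsupp k).trans hδs))
  · apply Integrable.restrict
    rw [integrable_indicator_iff hKc.measurableSet]
    apply Integrable.add
    · exact ((h0.integrableOn_compact_subset hδs hKc).norm).mul_const _
    · apply integrable_finsetSum
      intro i _
      exact (((hg i).integrableOn_compact_subset hδs hKc).norm).mul_const _
  · intro k
    refine Eventually.of_forall fun p => ?_
    by_cases hp : p ∈ K
    · rw [Set.indicator_of_mem hp]
      refine (norm_add_le _ _).trans (add_le_add ?_ ((norm_sum_le _ _).trans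
        (Finset.sum_le_sum fun i _ => ?_)))
      · rw [norm_mul]
        exact mul_le_mul_of_nonneg_left (hC0 k p) (abs_nonneg _)
      · rw [norm_mul, hder]
        exact mul_le_mul_of_nonneg_left (hC i k p) (abs_nonneg _)
    · rw [Set.indicator_of_notMem hp]
      rw [image_eq_zero_of_notMem_tsupport (fun h => hp (hsupp k h))]
      have : ∀ i, pdX (Φ k) i p = 0 := fun i =>
        image_eq_zero_of_notMem_tsupport (fun h => hp (hsupp k (htX k i h)))
      simp [this]
  · refine Eventually.of_forall fun p => ?_
    apply Tendsto.add
    · exact (ContDiffBump.convolution_tendsto_right_of_continuous hb0 hφ.continuous p).const_mul _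
    · apply tendsto_finsetSum
      intro i _
      simp_rw [hder]
      exact (ContDiffBump.convolution_tendsto_right_of_continuous hb0 (hcX i) p).const_mul _

lemma oddPow_of_nonneg {q x : ℝ} (hq : 1 < q) (hx : 0 ≤ x) : oddPow q x = x ^ q := by
  unfold oddPow
  rw [abs_of_nonneg hx]
  nth_rewrite 2 [← Real.rpow_one x]
  rw [← Real.rpow_add_of_nonneg hx (by linarith) (by norm_num)]
  congr 1; ring

lemma oddPow_of_nonpos {q x : ℝ} (hq : 1 < q) (hx : x ≤ 0) : oddPow q x = - (-x) ^ q := by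
  have h := oddPow_of_nonneg hq (neg_nonneg.2 hx)
  unfold oddPow at h ⊢
  rw [abs_neg] at h
  linarith

lemma rpow_super {q x y : ℝ} (hq : 1 < q) (hx : 0 ≤ x) (hxy : x ≤ y) :
    (y - x) ^ q + x ^ q ≤ y ^ q := by
  have := Real.add_rpow_le_rpow_add (sub_nonneg.2 hxy) hx hq.le
  simpa using this

lemma oddPow_sub_ge {q x y : ℝ} (hq : 1 < q) (hxy : y ≤ x) :
    (1 / 2 : ℝ) ^ q * (x - y) ^ q ≤ oddPow q x - oddPow q y := by
  have hd : 0 ≤ x - y := sub_nonneg.2 hxy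
  have hq0 : 0 ≤ q := by linarith
  rw [← Real.mul_rpow (by norm_num) hd]
  have hle : (1 / 2 * (x - y)) ^ q ≤ (x - y) ^ q :=
    Real.rpow_le_rpow (by positivity) (by linarith) hq0
  rcases le_total 0 y with hy | hy
  · rw [oddPow_of_nonneg hq hy, oddPow_of_nonneg hq (hy.trans hxy)]
    linarith [rpow_super hq hy hxy]
  rcases le_total 0 x with hx | hx
  · rw [oddPow_of_nonpos hq hy, oddPow_of_nonneg hq hx]
    have h1 : 0 ≤ x ^ q := Real.rpow_nonneg hx q
    have h2 : 0 ≤ (-y) ^ q := Real.rpow_nonneg (by linarith) q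
    rcases le_total (-y) x with h | h
    · have := Real.rpow_le_rpow (z := q) (by positivity) (show 1 / 2 * (x - y) ≤ x by linarith) hq0
      linarith
    · have := Real.rpow_le_rpow (z := q) (by positivity) (show 1 / 2 * (x - y) ≤ -y by linarith) hq0
      linarith
  · rw [oddPow_of_nonpos hq hy, oddPow_of_nonpos hq hx]
    have := rpow_super hq (show 0 ≤ -x by linarith) (show -x ≤ -y by linarith)
    rw [show -y - -x = x - y by ring] at this
    linarith

lemma base_A {p q : ℝ} (hp : 0 < p) (hpq : p < q) {δ : ℝ} (hδ : 0 < δ) :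
    ∃ C, 0 ≤ C ∧ ∀ y, 0 ≤ y → y ^ p ≤ δ * y ^ q + C := by
  set Y := δ ^ (-1 / (q - p)) with hY
  have hY0 : 0 < Y := Real.rpow_pos_of_pos hδ _
  refine ⟨Y ^ p, by positivity, fun y hy => ?_⟩
  rcases le_total y Y with h | h
  · have := Real.rpow_le_rpow hy h hp.le
    have h2 : 0 ≤ δ * y ^ q := by positivity
    linarith
  · have hy0 : 0 < y := hY0.trans_le h
    have h1 : y ^ p = y ^ (p - q) * y ^ q := by rw [← Real.rpow_add hy0]; congr 1; ring
    have h2 : y ^ (p - q) ≤ Y ^ (p - q) := Real.rpow_le_rpow_of_nonpos hY0 h (by linarith)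
    have h3 : Y ^ (p - q) = δ := by
      rw [hY, ← Real.rpow_mul hδ.le]
      have : q - p ≠ 0 := by linarith
      rw [show -1 / (q - p) * (p - q) = 1 by field_simp; ring, Real.rpow_one]
    rw [h1]
    rw [h3] at h2
    have := mul_le_mul_of_nonneg_right h2 (show 0 ≤ y ^ q by positivity)
    have h5 : 0 ≤ Y ^ p := by positivity
    linarith

lemma base_B {p q : ℝ} (hp : 0 < p) (hpq : p < q) {δ : ℝ} (hδ : 0 < δ) :
    ∃ C, 0 ≤ C ∧ ∀ y, 0 ≤ y → y ^ p ≤ δ + C * y ^ q := by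
  set Y := δ ^ (1 / p) with hY
  have hY0 : 0 < Y := Real.rpow_pos_of_pos hδ _
  refine ⟨Y ^ (p - q), by positivity, fun y hy => ?_⟩
  have h5 : 0 ≤ y ^ q := by positivity
  rcases le_total y Y with h | h
  · have := Real.rpow_le_rpow hy h hp.le
    have h3 : Y ^ p = δ := by
      rw [hY, ← Real.rpow_mul hδ.le, one_div_mul_cancel hp.ne', Real.rpow_one]
    have h2 : 0 ≤ Y ^ (p - q) * y ^ q := by positivity
    linarith
  · have hy0 : 0 < y := hY0.trans_le h
    have h1 : y ^ p = y ^ (p - q) * y ^ q := by rw [← Real.rpow_add hy0]; congr 1; ring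
    have h2 : y ^ (p - q) ≤ Y ^ (p - q) := Real.rpow_le_rpow_of_nonpos hY0 h (by linarith)
    have := mul_le_mul_of_nonneg_right h2 h5
    linarith

lemma scal_A {ν q : ℝ} (hν : 0 < ν) (hν1 : ν < 1) (hq : 1 + ν < q) {δ : ℝ} (hδ : 0 < δ) :
    ∃ C, 0 ≤ C ∧ ∀ y : ℝ, 0 ≤ y → y + y ^ (1 - ν) + y ^ (1 + ν) ≤ C + δ * y ^ q := by
  obtain ⟨C1, h1, H1⟩ := base_A (p := 1) (q := q) one_pos (by linarith) (show 0 < δ / 3 by linarith)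
  obtain ⟨C2, h2, H2⟩ := base_A (p := 1 - ν) (q := q) (by linarith) (by linarith)
    (show 0 < δ / 3 by linarith)
  obtain ⟨C3, h3, H3⟩ := base_A (p := 1 + ν) (q := q) (by linarith) (by linarith)
    (show 0 < δ / 3 by linarith)
  refine ⟨C1 + C2 + C3, by positivity, fun y hy => ?_⟩
  have a1 := H1 y hy
  rw [Real.rpow_one] at a1
  linarith [H2 y hy, H3 y hy]

lemma scal_B {ν q : ℝ} (hν : 0 < ν) (hν1 : ν < 1) (hq : 1 + ν < q) {δ : ℝ} (hδ : 0 < δ) :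
    ∃ C, 0 ≤ C ∧ ∀ y : ℝ, 0 ≤ y → y + y ^ (1 - ν) + y ^ (1 + ν) ≤ δ + C * y ^ q := by
  obtain ⟨C1, h1, H1⟩ := base_B (p := 1) (q := q) one_pos (by linarith) (show 0 < δ / 3 by linarith)
  obtain ⟨C2, h2, H2⟩ := base_B (p := 1 - ν) (q := q) (by linarith) (by linarith)
    (show 0 < δ / 3 by linarith)
  obtain ⟨C3, h3, H3⟩ := base_B (p := 1 + ν) (q := q) (by linarith) (by linarith)
    (show 0 < δ / 3 by linarith)
  refine ⟨C1 + C2 + C3, by positivity, fun y hy => ?_⟩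
  have a1 := H1 y hy
  rw [Real.rpow_one] at a1
  linarith [H2 y hy, H3 y hy]

/-- Young-type absorption for a positive semidefinite form. -/
lemma form_young {n : ℕ} (a : Fin n → Fin n → ℝ) (hsym : ∀ i j, a i j = a j i)
    (hpsd : ∀ ξ : Xn n, 0 ≤ ∑ i, ∑ j, a i j * ξ i * ξ j) (x y : Fin n → ℝ) (s r : ℝ) :
    2 * (s * r) * ∑ i, ∑ j, a i j * y i * x j ≤
      s ^ 2 * ∑ i, ∑ j, a i j * x i * x j + r ^ 2 * ∑ i, ∑ j, a i j * y i * y j := by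
  have h := hpsd (WithLp.toLp 2 (fun i => s * x i - r * y i))
  simp only [] at h
  have h2 : ∑ i, ∑ j, a i j * y i * x j = ∑ i, ∑ j, a i j * x i * y j := by
    rw [Finset.sum_comm]
    refine Finset.sum_congr rfl fun i _ => Finset.sum_congr rfl fun j _ => ?_
    rw [hsym j i]; ring
  have h3 : ∑ i, ∑ j, a i j * (s * x i - r * y i) * (s * x j - r * y j) =
      s ^ 2 * ∑ i, ∑ j, a i j * x i * x j + r ^ 2 * ∑ i, ∑ j, a i j * y i * y j
      - s * r * ∑ i, ∑ j, a i j * y i * x j - s * r * ∑ i, ∑ j, a i j * x i * y j := by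
    simp only [Finset.mul_sum, ← Finset.sum_add_distrib, ← Finset.sum_sub_distrib]
    refine Finset.sum_congr rfl fun i _ => Finset.sum_congr rfl fun j _ => ?_
    ring
  rw [h3] at h
  rw [← h2] at h
  linarith

lemma form_bound {n : ℕ} (a : Fin n → Fin n → ℝ) {M B : ℝ} (hM : ∀ i j, |a i j| ≤ M)
    (y : Fin n → ℝ) (hy : ∀ i, |y i| ≤ B) (hB : 0 ≤ B) (hM0 : 0 ≤ M) :
    ∑ i, ∑ j, a i j * y i * y j ≤ n ^ 2 * M * B ^ 2 := by
  have : ∑ i : Fin n, ∑ j : Fin n, a i j * y i * y j ≤ ∑ i : Fin n, ∑ j : Fin n, M * B ^ 2 := by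
    refine Finset.sum_le_sum fun i _ => Finset.sum_le_sum fun j _ => ?_
    refine (le_abs_self _).trans ?_
    rw [abs_mul, abs_mul, pow_two, ← mul_assoc]
    gcongr
    · exact hM i j
    · exact hy i
    · exact hy j
  refine this.trans (le_of_eq ?_)
  simp
  ring

/-- Powers of the cutoff are absorbed. -/
lemma pow_absorb {q ν z e p : ℝ} {k : ℕ} (hq : 1 < q) (hk : (k : ℝ) * (1 + ν) / q ≤ k - 2)
    (hk3 : 3 ≤ k) (hz : 0 ≤ z) (he : 0 ≤ e) (he1 : e ≤ 1) (_hp : 0 < p) (hpν : p ≤ 1 + ν) :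
    z ^ p * e ^ (k - 2) ≤ (z * e ^ ((k : ℝ) / q)) ^ p := by
  rw [Real.mul_rpow hz (by positivity)]
  refine mul_le_mul_of_nonneg_left ?_ (by positivity)
  rw [← Real.rpow_mul he]
  have hk0 : (0 : ℝ) < k := by positivity
  rcases he.eq_or_lt with h | h
  · rw [← h, zero_pow (by omega)]
    positivity
  · rw [← Real.rpow_natCast]
    apply Real.rpow_le_rpow_of_exponent_ge h he1
    rw [Nat.cast_sub (by omega)]
    push_cast
    refine le_trans ?_ hk
    rw [div_mul_eq_mul_div]
    gcongr

/-- the purely numerical estimate -/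
lemma num_est {q ν z e m D B δ C : ℝ} {k : ℕ} (hq : 1 < q) (hν : 0 < ν) (hν1 : ν ≤ 1 / 2)
    (hk : (k : ℝ) * (1 + ν) / q ≤ k - 2)
    (hk3 : 3 ≤ k) (hz : 0 < z) (he : 0 ≤ e) (he1 : e ≤ 1) (hm : 0 < m) (hD : 0 ≤ D) (hB : 0 ≤ B)
    (hyp : ∀ y : ℝ, 0 ≤ y → y + y ^ (1 - ν) + y ^ (1 + ν) ≤ δ + C * y ^ q) :
    m * (z + z ^ (1 - ν) / (1 - ν)) * (k * e ^ (k - 1) * (D * m ^ (q - 1)))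
      + e ^ (k - 2) * ((k : ℝ) ^ 2 * m * (1 + z ^ (-ν)) ^ 2 * z ^ (1 + ν) / (4 * ν))
        * (B * m ^ (q - 1)) ≤
    (2 * k * D + k ^ 2 * B / (2 * ν)) * m ^ q * (δ + C * (z ^ q * e ^ k)) := by
  have hmq : m * m ^ (q - 1) = m ^ q := by
    nth_rewrite 1 [← Real.rpow_one m]
    rw [← Real.rpow_add hm]; congr 1; ring
  have hz1 : z ^ (-ν) * z ^ (1 + ν) = z := by
    rw [← Real.rpow_add hz, show -ν + (1 + ν) = 1 by ring, Real.rpow_one]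
  have hz2 : z ^ (-ν) * z = z ^ (1 - ν) := by
    nth_rewrite 2 [← Real.rpow_one z]
    rw [← Real.rpow_add hz]; congr 1; ring
  have hF : (1 + z ^ (-ν)) ^ 2 * z ^ (1 + ν) = z ^ (1 + ν) + 2 * z + z ^ (1 - ν) := by
    calc (1 + z ^ (-ν)) ^ 2 * z ^ (1 + ν) = z ^ (1 + ν) + 2 * (z ^ (-ν) * z ^ (1 + ν))
        + z ^ (-ν) * (z ^ (-ν) * z ^ (1 + ν)) := by ring
      _ = _ := by rw [hz1, hz2]
  set P := z + z ^ (1 - ν) + z ^ (1 + ν) with hP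
  have p1 : 0 ≤ z ^ (1 - ν) := by positivity
  have p2 : 0 ≤ z ^ (1 + ν) := by positivity
  have hy := hyp (z * e ^ ((k : ℝ) / q)) (by positivity)
  have hyq : (z * e ^ ((k : ℝ) / q)) ^ q = z ^ q * e ^ k := by
    rw [Real.mul_rpow hz.le (by positivity), ← Real.rpow_mul he, div_mul_cancel₀ _ (by linarith),
      Real.rpow_natCast]
  have hPe : P * e ^ (k - 2) ≤ δ + C * (z ^ q * e ^ k) := by
    rw [← hyq]
    refine le_trans ?_ hy
    have b1 := pow_absorb (p := 1) hq hk hk3 hz.le he he1 one_pos (by linarith)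
    have b2 := pow_absorb (p := 1 - ν) hq hk hk3 hz.le he he1 (by linarith) (by linarith)
    have b3 := pow_absorb (p := 1 + ν) hq hk hk3 hz.le he he1 (by linarith) (by linarith)
    rw [Real.rpow_one, Real.rpow_one] at b1
    rw [hP]
    linarith
  have c1 : z + z ^ (1 - ν) / (1 - ν) ≤ 2 * P := by
    have : z ^ (1 - ν) / (1 - ν) ≤ 2 * z ^ (1 - ν) := by
      rw [div_le_iff₀ (by linarith)]
      nlinarith
    rw [hP]; linarith
  have c2 : e ^ (k - 1) ≤ e ^ (k - 2) := pow_le_pow_of_le_one he he1 (by omega)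
  have e1 : m * (z + z ^ (1 - ν) / (1 - ν)) * (k * e ^ (k - 1) * (D * m ^ (q - 1))) ≤
      2 * k * D * m ^ q * (P * e ^ (k - 2)) := by
    calc m * (z + z ^ (1 - ν) / (1 - ν)) * (k * e ^ (k - 1) * (D * m ^ (q - 1)))
        = (k * D * m ^ q) * ((z + z ^ (1 - ν) / (1 - ν)) * e ^ (k - 1)) := by rw [← hmq]; ring
      _ ≤ (k * D * m ^ q) * ((2 * P) * e ^ (k - 2)) := by gcongr
      _ = _ := by ring
  have e2 : e ^ (k - 2) * ((k : ℝ) ^ 2 * m * (1 + z ^ (-ν)) ^ 2 * z ^ (1 + ν) / (4 * ν))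
        * (B * m ^ (q - 1)) ≤ k ^ 2 * B / (2 * ν) * m ^ q * (P * e ^ (k - 2)) := by
    calc e ^ (k - 2) * ((k : ℝ) ^ 2 * m * (1 + z ^ (-ν)) ^ 2 * z ^ (1 + ν) / (4 * ν))
        * (B * m ^ (q - 1))
        = e ^ (k - 2) * ((k : ℝ) ^ 2 * B * (m * m ^ (q - 1)) / (4 * ν))
          * ((1 + z ^ (-ν)) ^ 2 * z ^ (1 + ν)) := by ring
      _ ≤ e ^ (k - 2) * ((k : ℝ) ^ 2 * B * (m * m ^ (q - 1)) / (4 * ν)) * (2 * P) := by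
          rw [hF]
          gcongr
          rw [hP]; linarith
      _ = _ := by rw [hmq]; field_simp; ring
  have hC0 : 0 ≤ (2 * k * D + k ^ 2 * B / (2 * ν)) * m ^ q := by positivity
  have := mul_le_mul_of_nonneg_left hPe hC0
  linarith

def cutE {n : ℕ} (R : ℝ) (p : Pt n) : ℝ := Real.smoothTransition (2 - (p.1 + ‖p.2‖ ^ 2) / R ^ 2)

def cutC {n : ℕ} (τ : ℝ) (p : Pt n) : ℝ := Real.smoothTransition (p.1 / τ - 1)

lemma cutE_contDiff {n : ℕ} (R : ℝ) : ContDiff ℝ 1 (cutE (n := n) R) := by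
  unfold cutE
  apply (Real.smoothTransition.contDiff (n := 1)).comp
  have h : ContDiff ℝ 1 (fun p : Pt n => ‖p.2‖ ^ 2) := contDiff_snd.norm_sq ℝ
  exact contDiff_const.sub ((contDiff_fst.add h).div_const _)

lemma cutC_contDiff {n : ℕ} (τ : ℝ) : ContDiff ℝ 1 (cutC (n := n) τ) := by
  unfold cutC
  apply (Real.smoothTransition.contDiff (n := 1)).comp
  exact (contDiff_fst.div_const _).sub contDiff_const

lemma st_deriv_bound : ∃ D : ℝ, 0 < D ∧ ∀ s, |deriv Real.smoothTransition s| ≤ D := by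
  have hc : Continuous (deriv Real.smoothTransition) :=
    (Real.smoothTransition.contDiff (n := 1)).continuous_deriv (by simp)
  have hs : HasCompactSupport (deriv Real.smoothTransition) := by
    apply HasCompactSupport.of_support_subset_isCompact (isCompact_Icc (a := (0 : ℝ)) (b := 1))
    intro s hs
    by_contra h
    apply hs
    rw [Set.mem_Icc, not_and_or, not_le, not_le] at h
    rcases h with h | h
    · have : Real.smoothTransition =ᶠ[𝓝 s] fun _ => (0 : ℝ) := by
        filter_upwards [Iio_mem_nhds h] with x hx
        exact Real.smoothTransition.zero_of_nonpos (le_of_lt hx)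
      rw [this.deriv_eq]; simp
    · have : Real.smoothTransition =ᶠ[𝓝 s] fun _ => (1 : ℝ) := by
        filter_upwards [Ioi_mem_nhds h] with x hx
        exact Real.smoothTransition.one_of_one_le (le_of_lt hx)
      rw [this.deriv_eq]; simp
  obtain ⟨C, hC⟩ := hc.bounded_above_of_compact_support hs
  exact ⟨max C 1, by positivity, fun s => (hC s).trans (le_max_left _ _)⟩

lemma st_deriv_nonneg (s : ℝ) : 0 ≤ deriv Real.smoothTransition s :=
  Real.smoothTransition.monotone.deriv_nonneg

lemma st_hasDerivAt (s : ℝ) : HasDerivAt Real.smoothTransition (deriv Real.smoothTransition s) s :=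
  ((Real.smoothTransition.contDiff (n := 1)).differentiable (by simp) s).hasDerivAt

lemma cutE_hasFDerivAt {n : ℕ} (R : ℝ) (p : Pt n) : HasFDerivAt (cutE (n := n) R)
    (deriv Real.smoothTransition (2 - (p.1 + ‖p.2‖ ^ 2) / R ^ 2) •
      (-((R ^ 2)⁻¹ • (ContinuousLinearMap.fst ℝ ℝ (Xn n) +
        2 • (innerSL ℝ p.2).comp (ContinuousLinearMap.snd ℝ ℝ (Xn n)))))) p := by
  have h1 : HasFDerivAt (fun p : Pt n => ‖p.2‖ ^ 2)
      (2 • (innerSL ℝ p.2).comp (ContinuousLinearMap.snd ℝ ℝ (Xn n))) p :=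
    (hasFDerivAt_snd (p := p)).norm_sq
  have h2 : HasFDerivAt (fun p : Pt n => 2 - (p.1 + ‖p.2‖ ^ 2) / R ^ 2)
      (-((R ^ 2)⁻¹ • (ContinuousLinearMap.fst ℝ ℝ (Xn n) +
        2 • (innerSL ℝ p.2).comp (ContinuousLinearMap.snd ℝ ℝ (Xn n))))) p := by
    simp only [div_eq_mul_inv]
    exact (((hasFDerivAt_fst (p := p)).add h1).mul_const _).const_sub _
  exact (st_hasDerivAt _).comp_hasFDerivAt p h2

lemma cutC_hasFDerivAt {n : ℕ} (τ : ℝ) (p : Pt n) : HasFDerivAt (cutC (n := n) τ)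
    (deriv Real.smoothTransition (p.1 / τ - 1) •
      (τ⁻¹ • ContinuousLinearMap.fst ℝ ℝ (Xn n))) p := by
  have h2 : HasFDerivAt (fun p : Pt n => p.1 / τ - 1)
      (τ⁻¹ • ContinuousLinearMap.fst ℝ ℝ (Xn n)) p := by
    simp only [div_eq_mul_inv]
    exact ((hasFDerivAt_fst (p := p)).mul_const _).sub_const _
  exact (st_hasDerivAt _).comp_hasFDerivAt p h2

lemma pdT_cutC {n : ℕ} {τ : ℝ} (hτ : 0 < τ) (p : Pt n) : 0 ≤ pdT (cutC τ) p := by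
  unfold pdT
  rw [(cutC_hasFDerivAt τ p).fderiv]
  simp
  have := st_deriv_nonneg (p.1 / τ - 1)
  positivity

lemma pdX_cutC {n : ℕ} {τ : ℝ} (i : Fin n) (p : Pt n) : pdX (cutC τ) i p = 0 := by
  unfold pdX
  rw [(cutC_hasFDerivAt τ p).fderiv]
  simp

lemma pdT_cutE_eq {n : ℕ} (R : ℝ) (p : Pt n) : pdT (cutE R) p =
    - (deriv Real.smoothTransition (2 - (p.1 + ‖p.2‖ ^ 2) / R ^ 2) / R ^ 2) := by
  unfold pdT
  rw [(cutE_hasFDerivAt R p).fderiv]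
  simp
  ring

lemma pdX_cutE_eq {n : ℕ} (R : ℝ) (i : Fin n) (p : Pt n) : pdX (cutE R) i p =
    - (deriv Real.smoothTransition (2 - (p.1 + ‖p.2‖ ^ 2) / R ^ 2) * (2 * p.2 i) / R ^ 2) := by
  unfold pdX
  rw [(cutE_hasFDerivAt R p).fderiv]
  simp [EuclideanSpace.inner_single_right]
  ring

lemma st_deriv_zero_of_gt {s : ℝ} (h : 1 < s) : deriv Real.smoothTransition s = 0 := by
  have : Real.smoothTransition =ᶠ[𝓝 s] fun _ => (1 : ℝ) := by
    filter_upwards [Ioi_mem_nhds h] with x hx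
    exact Real.smoothTransition.one_of_one_le (le_of_lt hx)
  rw [this.deriv_eq]; simp

lemma st_deriv_zero_of_lt {s : ℝ} (h : s < 0) : deriv Real.smoothTransition s = 0 := by
  have : Real.smoothTransition =ᶠ[𝓝 s] fun _ => (0 : ℝ) := by
    filter_upwards [Iio_mem_nhds h] with x hx
    exact Real.smoothTransition.zero_of_nonpos (le_of_lt hx)
  rw [this.deriv_eq]; simp

lemma cutE_bounds : ∃ D : ℝ, 0 < D ∧ ∀ (n : ℕ) (R : ℝ), 0 < R → ∀ p : Pt n, 0 ≤ p.1 →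
    (-pdT (cutE R) p ≤ D / R ^ 2) ∧ (∀ i, |pdX (cutE R) i p| ≤ D / R) ∧
    (p.1 + ‖p.2‖ ^ 2 < R ^ 2 → pdT (cutE R) p = 0 ∧ ∀ i, pdX (cutE R) i p = 0) := by
  obtain ⟨D, hD, hDb⟩ := st_deriv_bound
  refine ⟨3 * D, by positivity, fun n R hR p hp => ⟨?_, fun i => ?_, fun h => ?_⟩⟩
  · rw [pdT_cutE_eq, neg_neg]
    gcongr
    have := (le_abs_self _).trans (hDb (2 - (p.1 + ‖p.2‖ ^ 2) / R ^ 2))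
    linarith
  · rw [pdX_cutE_eq]
    by_cases h : 2 - (p.1 + ‖p.2‖ ^ 2) / R ^ 2 < 0
    · rw [st_deriv_zero_of_lt h]; simp; positivity
    · have h1 : (p.1 + ‖p.2‖ ^ 2) / R ^ 2 ≤ 2 := by linarith
      rw [div_le_iff₀ (by positivity)] at h1
      have h2 : |p.2 i| ≤ ‖p.2‖ := by simpa using PiLp.norm_apply_le p.2 i
      have h3 : 2 * |p.2 i| ≤ 3 * R := by
        apply abs_le_of_sq_le_sq' _ (by positivity) |>.2
        have : |p.2 i| ^ 2 ≤ ‖p.2‖ ^ 2 := by gcongr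
        nlinarith
      rw [abs_neg, abs_div, abs_mul, abs_mul, abs_of_pos (show (0:ℝ) < 2 by norm_num),
        abs_of_pos (show 0 < R ^ 2 by positivity), div_le_div_iff₀ (by positivity) hR]
      have := mul_le_mul (hDb (2 - (p.1 + ‖p.2‖ ^ 2) / R ^ 2)) h3 (by positivity) hD.le
      calc _ ≤ D * (3 * R) * R := by gcongr
        _ = _ := by ring
  · have : deriv Real.smoothTransition (2 - (p.1 + ‖p.2‖ ^ 2) / R ^ 2) = 0 := by
      apply st_deriv_zero_of_gt
      have : (p.1 + ‖p.2‖ ^ 2) / R ^ 2 < 1 := by rwa [div_lt_one (by positivity)]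
      linarith
    refine ⟨by rw [pdT_cutE_eq, this]; simp, fun i => by rw [pdX_cutE_eq, this]; simp⟩

lemma pdT_cutE_nonpos {n : ℕ} (R : ℝ) (p : Pt n) : pdT (cutE R) p ≤ 0 := by
  rw [pdT_cutE_eq, neg_nonpos]
  have := st_deriv_nonneg (2 - (p.1 + ‖p.2‖ ^ 2) / R ^ 2)
  positivity

/-- the truncated paraboloid -/
def regZ (n : ℕ) (τ R : ℝ) : Set (Pt n) := {p | τ ≤ p.1 ∧ p.1 + ‖p.2‖ ^ 2 ≤ 2 * R ^ 2}

lemma regZ_closed (n : ℕ) (τ R : ℝ) : IsClosed (regZ n τ R) :=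
  (isClosed_le continuous_const continuous_fst).inter
    (isClosed_le (f := fun p : Pt n => p.1 + ‖p.2‖ ^ 2) (by fun_prop) continuous_const)

lemma regZ_sub (n : ℕ) {τ R : ℝ} (hτ : 0 ≤ τ) (hR : 0 < R) : regZ n τ R ⊆
    Set.Icc 0 (2 * R ^ 2) ×ˢ Metric.closedBall (0 : Xn n) (2 * R) := by
  rintro p ⟨h1, h2⟩
  refine ⟨⟨by linarith, by nlinarith [sq_nonneg ‖p.2‖]⟩, ?_⟩
  rw [mem_closedBall_zero_iff]
  apply abs_le_of_sq_le_sq' _ (by positivity) |>.2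
  nlinarith [sq_nonneg R]

lemma regZ_compact (n : ℕ) {τ R : ℝ} (hτ : 0 ≤ τ) (hR : 0 < R) : IsCompact (regZ n τ R) :=
  (isCompact_Icc.prod (isCompact_closedBall _ _)).of_isClosed_subset (regZ_closed n τ R)
    (regZ_sub n hτ hR)

lemma regZ_vol (n : ℕ) : ∃ V : ℝ, 0 ≤ V ∧ ∀ τ R : ℝ, 0 ≤ τ → 0 < R →
    volume.real (regZ n τ R) ≤ V * R ^ (n + 2) := by
  refine ⟨2 * (2 ^ n * (volume : Measure (Xn n)).real (Metric.ball (0 : Xn n) 1)), by positivity,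
    fun τ R hτ hR => ?_⟩
  refine (measureReal_mono (regZ_sub n hτ hR)
    (isCompact_Icc.prod (isCompact_closedBall _ _)).measure_lt_top.ne).trans (le_of_eq ?_)
  have : (volume : Measure (Pt n)) = (volume : Measure ℝ).prod (volume : Measure (Xn n)) := rfl
  rw [this, measureReal_prod_prod, Measure.addHaar_real_closedBall _ _ (by positivity)]
  simp [Measure.real]
  rw [ENNReal.toReal_ofReal (by positivity)]
  ring

def cutPsi {n : ℕ} (τ R : ℝ) (k : ℕ) (p : Pt n) : ℝ := cutC τ p * cutE R p ^ k

lemma cutPsi_tsupport {n : ℕ} {τ R : ℝ} {k : ℕ} (hτ : 0 < τ) (hR : 0 < R) (hk : k ≠ 0) :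
    tsupport (cutPsi (n := n) τ R k) ⊆ regZ n τ R := by
  apply closure_minimal _ (regZ_closed n τ R)
  intro p hp
  have h := mul_ne_zero_iff.1 hp
  constructor
  · by_contra h1
    apply h.1
    apply Real.smoothTransition.zero_of_nonpos
    rw [sub_nonpos, div_le_one hτ]
    exact (not_le.1 h1).le
  · by_contra h1
    apply h.2
    rw [pow_eq_zero_iff hk]
    apply Real.smoothTransition.zero_of_nonpos
    rw [sub_nonpos, le_div_iff₀ (by positivity)]
    exact (not_le.1 h1).le

lemma cutPsi_contDiff {n : ℕ} (τ R : ℝ) (k : ℕ) : ContDiff ℝ 1 (cutPsi (n := n) τ R k) :=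
  (cutC_contDiff τ).mul ((cutE_contDiff R).pow k)

lemma cutE_mem {n : ℕ} (R : ℝ) (p : Pt n) : 0 ≤ cutE R p ∧ cutE R p ≤ 1 :=
  ⟨Real.smoothTransition.nonneg _, Real.smoothTransition.le_one _⟩

lemma cutC_mem {n : ℕ} (R : ℝ) (p : Pt n) : 0 ≤ cutC R p ∧ cutC R p ≤ 1 :=
  ⟨Real.smoothTransition.nonneg _, Real.smoothTransition.le_one _⟩

lemma cutPsi_mem {n : ℕ} (τ R : ℝ) (k : ℕ) (p : Pt n) :
    0 ≤ cutPsi τ R k p ∧ cutPsi τ R k p ≤ 1 :=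
  ⟨mul_nonneg (cutC_mem τ p).1 (pow_nonneg (cutE_mem R p).1 _),
    mul_le_one₀ (cutC_mem τ p).2 (pow_nonneg (cutE_mem R p).1 _)
      (pow_le_one₀ (cutE_mem R p).1 (cutE_mem R p).2)⟩

lemma cutPsi_one {n : ℕ} {τ R : ℝ} (k : ℕ) (hτ : 0 < τ) (hR : 0 < R) {p : Pt n}
    (h1 : 2 * τ ≤ p.1) (h2 : p.1 + ‖p.2‖ ^ 2 ≤ R ^ 2) : cutPsi τ R k p = 1 := by
  have a : cutC τ p = 1 := by
    apply Real.smoothTransition.one_of_one_le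
    rw [le_sub_iff_add_le, le_div_iff₀ hτ]; linarith
  have b : cutE R p = 1 := by
    apply Real.smoothTransition.one_of_one_le
    have : (p.1 + ‖p.2‖ ^ 2) / R ^ 2 ≤ 1 := by rwa [div_le_one (by positivity)]
    linarith
  simp [cutPsi, a, b]

lemma fderiv_cutPsi {n : ℕ} (τ R : ℝ) (k : ℕ) (p v : Pt n) :
    fderiv ℝ (cutPsi τ R k) p v = fderiv ℝ (cutC τ) p v * cutE R p ^ k
      + cutC τ p * (k * cutE R p ^ (k - 1) * fderiv ℝ (cutE R) p v) := by
  have hE : DifferentiableAt ℝ (cutE (n := n) R) p := (cutE_contDiff R).differentiable (by simp) p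
  have hC : DifferentiableAt ℝ (cutC (n := n) τ) p := (cutC_contDiff τ).differentiable (by simp) p
  have := (hC.hasFDerivAt.mul (hE.hasFDerivAt.pow k)).fderiv
  have h2 : cutPsi (n := n) τ R k = cutC τ * (fun x => cutE R x ^ k) := rfl
  rw [h2, this]
  simp
  ring

lemma contDiff_mul_cut {n : ℕ} {f ψ : Pt n → ℝ} (hf : ContDiffOn ℝ 1 f (halfSpace n))
    (hψ : ContDiff ℝ 1 ψ) (hs : tsupport ψ ⊆ halfSpace n) :
    ContDiff ℝ 1 (fun p => f p * ψ p) := by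
  rw [contDiff_iff_contDiffAt]
  intro p
  by_cases hp : p ∈ halfSpace n
  · exact (hf.contDiffAt ((isOpen_halfSpace n).mem_nhds hp)).mul hψ.contDiffAt
  · have h1 : ψ =ᶠ[𝓝 p] 0 := notMem_tsupport_iff_eventuallyEq.1 (fun h => hp (hs h))
    have h2 : (fun p => f p * ψ p) =ᶠ[𝓝 p] fun _ => 0 := by
      filter_upwards [h1] with x hx
      simp [hx]
    exact contDiffAt_const.congr_of_eventuallyEq h2

lemma tsupport_mul_cut {n : ℕ} (f ψ : Pt n → ℝ) :
    tsupport (fun p => f p * ψ p) ⊆ tsupport ψ := by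
  apply closure_mono
  intro p hp h
  exact hp (by simp [h])

lemma two_rpow {q x y : ℝ} (hq : 1 < q) (hx : 0 ≤ x) (hy : 0 ≤ y) :
    (x + y) ^ q ≤ 2 ^ q * (x ^ q + y ^ q) := by
  have h1 : 0 ≤ x ^ q := by positivity
  have h2 : 0 ≤ y ^ q := by positivity
  have hq0 : 0 ≤ q := by linarith
  rcases le_total x y with h | h
  · have := Real.rpow_le_rpow (z := q) (by positivity) (show x + y ≤ 2 * y by linarith) hq0
    rw [Real.mul_rpow (by norm_num) hy] at this
    refine this.trans ?_
    gcongr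
    linarith
  · have := Real.rpow_le_rpow (z := q) (by positivity) (show x + y ≤ 2 * x by linarith) hq0
    rw [Real.mul_rpow (by norm_num) hx] at this
    refine this.trans ?_
    gcongr
    linarith

lemma sum_split {n : ℕ} (a : Fin n → Fin n → ℝ) (wx ηx : Fin n → ℝ) (A B : ℝ) :
    ∑ i, (∑ j, a i j * wx j) * (A * ηx i - B * wx i) =
      A * ∑ i, ∑ j, a i j * ηx i * wx j - B * ∑ i, ∑ j, a i j * wx i * wx j := by
  simp only [Finset.mul_sum, Finset.sum_mul, ← Finset.sum_sub_distrib]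
  refine Finset.sum_congr rfl fun i _ => Finset.sum_congr rfl fun j _ => ?_
  ring

lemma pw_est {n : ℕ} {q ν z e m D M c δ C χ χt w ηt B1 : ℝ} {k : ℕ} (hq : 1 < q) (hν : 0 < ν)
    (hν1 : ν ≤ 1 / 2) (hk : (k : ℝ) * (1 + ν) / q ≤ k - 2)
    (hk3 : 3 ≤ k) (hz : 0 < z) (he : 0 ≤ e) (he1 : e ≤ 1) (hm : 0 < m) (hD : 0 ≤ D) (hM : 0 ≤ M)
    (hc : 0 ≤ c) (hw : 0 ≤ w) (hχ : 0 ≤ χ) (hχt : 0 ≤ χt)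
    (hyp : ∀ y : ℝ, 0 ≤ y → y + y ^ (1 - ν) + y ^ (1 + ν) ≤ δ + C * y ^ q)
    (a : Fin n → Fin n → ℝ) (hsym : ∀ i j, a i j = a j i)
    (hpsd : ∀ ξ : Xn n, 0 ≤ ∑ i, ∑ j, a i j * ξ i * ξ j) (haM : ∀ i j, |a i j| ≤ M)
    (wx ηx : Fin n → ℝ) (hηt : -ηt ≤ D * m ^ (q - 1)) (hηx : ∀ i, |ηx i| ≤ B1) (hB1 : 0 ≤ B1)
    (hB1m : B1 ^ 2 = D ^ 2 * m ^ (q - 1)) :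
    -(c * w ^ q * ((1 + z ^ (-ν)) * (χ * e ^ k)))
      - m * (z + z ^ (1 - ν) / (1 - ν)) * (χt * e ^ k + χ * (k * e ^ (k - 1) * ηt))
      + ∑ i, (∑ j, a i j * wx j) * ((1 + z ^ (-ν)) * (χ * (k * e ^ (k - 1) * ηx i))
        - ν * z ^ (-ν - 1) / m * wx i * (χ * e ^ k)) ≤
    -(c * w ^ q * (χ * e ^ k)) +
      χ * ((2 * k * D + k ^ 2 * (n ^ 2 * M * D ^ 2) / (2 * ν)) * m ^ q *
        (δ + C * (z ^ q * e ^ k))) := by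
  have hne := num_est (B := n ^ 2 * M * D ^ 2) hq hν hν1 hk hk3 hz he he1 hm hD (by positivity) hyp
  set F := 1 + z ^ (-ν) with hF
  have hzν : 0 < z ^ (-ν) := by positivity
  set G := m * (z + z ^ (1 - ν) / (1 - ν)) with hG
  have hG0 : 0 ≤ G := by
    have : 0 < 1 - ν := by linarith
    positivity
  set S0 := ν * z ^ (-ν - 1) / m with hS0
  have hS0p : 0 < S0 := by positivity
  set B := ∑ i, ∑ j, a i j * ηx i * wx j with hB
  set Q := ∑ i, ∑ j, a i j * wx i * wx j with hQ
  have hsum : ∑ i, (∑ j, a i j * wx j) * (F * (χ * (k * e ^ (k - 1) * ηx i))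
        - S0 * wx i * (χ * e ^ k)) = (F * χ * k * e ^ (k - 1)) * B - (S0 * χ * e ^ k) * Q := by
    rw [← sum_split]
    refine Finset.sum_congr rfl fun i _ => ?_
    ring
  rw [hsum]
  -- Young
  have hfy := form_young a hsym hpsd wx ηx (e * Real.sqrt S0) (k * F / (2 * Real.sqrt S0))
  have hsq : Real.sqrt S0 ^ 2 = S0 := Real.sq_sqrt hS0p.le
  have hsp : 0 < Real.sqrt S0 := Real.sqrt_pos.2 hS0p
  rw [show 2 * (e * Real.sqrt S0 * (k * F / (2 * Real.sqrt S0))) = k * e * F by field_simp] at hfy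
  rw [mul_pow, div_pow, mul_pow 2, hsq] at hfy
  have hfb := form_bound a haM ηx hηx hB1 hM
  rw [hB1m] at hfb
  have hr : (k * F) ^ 2 / (2 ^ 2 * S0) = (k : ℝ) ^ 2 * m * F ^ 2 * z ^ (1 + ν) / (4 * ν) := by
    have : z ^ (-ν - 1) = (z ^ (1 + ν))⁻¹ := by
      rw [← Real.rpow_neg hz.le]; congr 1; ring
    rw [hS0, this]
    have : 0 < z ^ (1 + ν) := by positivity
    field_simp
    ring
  rw [hr] at hfy
  have hr0 : 0 ≤ (k : ℝ) ^ 2 * m * F ^ 2 * z ^ (1 + ν) / (4 * ν) := by positivity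
  have hfy2 := hfy.trans (add_le_add_right (mul_le_mul_of_nonneg_left hfb hr0) _)
  have hχe : 0 ≤ χ * e ^ (k - 2) := by positivity
  have hfy3 := mul_le_mul_of_nonneg_left hfy2 hχe
  have ek : e ^ k = e ^ (k - 2) * e ^ 2 := by rw [← pow_add]; congr 1; omega
  have ek1 : e ^ (k - 1) = e ^ (k - 2) * e := by rw [← pow_succ]; congr 1; omega
  have hT : -(G * (χt * e ^ k + χ * (k * e ^ (k - 1) * ηt))) ≤
      χ * (G * (k * e ^ (k - 1) * (D * m ^ (q - 1)))) := by
    have h1 : 0 ≤ G * (χt * e ^ k) := by positivity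
    have h2 : 0 ≤ χ * G * (k * e ^ (k - 1)) := by positivity
    have := mul_le_mul_of_nonneg_left hηt h2
    linarith
  have hW : -(c * w ^ q * (F * (χ * e ^ k))) ≤ -(c * w ^ q * (χ * e ^ k)) := by
    have h1 : 0 ≤ c * w ^ q * (χ * e ^ k) := by positivity
    have h2 : 0 ≤ c * w ^ q * (χ * e ^ k) * z ^ (-ν) := by positivity
    rw [hF]; linarith
  have hfin := mul_le_mul_of_nonneg_left hne hχ
  have hid : (F * χ * k * e ^ (k - 1)) * B = χ * e ^ (k - 2) * (k * e * F * B) := by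
    rw [ek1]; ring
  have hid2 : (S0 * χ * e ^ k) * Q = χ * e ^ (k - 2) * (e ^ 2 * S0 * Q) := by
    rw [ek]; ring
  rw [hid, hid2]
  rw [mul_add] at hfy3 hfin
  linarith

lemma pw_est0 {n : ℕ} {q ν z e m c χ χt w : ℝ} {k : ℕ} (hν : 0 < ν)
    (hν1 : ν ≤ 1 / 2) (hz : 0 < z) (he : 0 ≤ e) (hm : 0 < m)
    (hc : 0 ≤ c) (hw : 0 ≤ w) (hχ : 0 ≤ χ) (hχt : 0 ≤ χt)
    (a : Fin n → Fin n → ℝ)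
    (hpsd : ∀ ξ : Xn n, 0 ≤ ∑ i, ∑ j, a i j * ξ i * ξ j)
    (wx : Fin n → ℝ) :
    -(c * w ^ q * ((1 + z ^ (-ν)) * (χ * e ^ k)))
      - m * (z + z ^ (1 - ν) / (1 - ν)) * (χt * e ^ k + χ * (k * e ^ (k - 1) * 0))
      + ∑ i, (∑ j, a i j * wx j) * ((1 + z ^ (-ν)) * (χ * (k * e ^ (k - 1) * 0))
        - ν * z ^ (-ν - 1) / m * wx i * (χ * e ^ k)) ≤
    -(c * w ^ q * (χ * e ^ k)) := by
  have hzν : 0 < z ^ (-ν) := by positivity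
  set S0 := ν * z ^ (-ν - 1) / m with hS0
  have hS0p : 0 < S0 := by positivity
  have hsum : ∑ i, (∑ j, a i j * wx j) * ((1 + z ^ (-ν)) * (χ * (k * e ^ (k - 1) * 0))
        - S0 * wx i * (χ * e ^ k)) = - ((S0 * χ * e ^ k) * ∑ i, ∑ j, a i j * wx i * wx j) := by
    have := sum_split a wx (fun _ => 0) 0 (S0 * χ * e ^ k)
    refine Eq.trans ?_ (this.trans (by ring))
    refine Finset.sum_congr rfl fun i _ => ?_
    ring
  rw [hsum]
  have hQ := hpsd (WithLp.toLp 2 wx)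
  simp only [] at hQ
  have h0 : 0 ≤ (S0 * χ * e ^ k) * ∑ i, ∑ j, a i j * wx i * wx j := by positivity
  have hG0 : 0 ≤ m * (z + z ^ (1 - ν) / (1 - ν)) * (χt * e ^ k) := by
    have : 0 < 1 - ν := by linarith
    positivity
  have h2 : 0 ≤ c * w ^ q * (χ * e ^ k) * z ^ (-ν) := by positivity
  rw [mul_zero, mul_zero, add_zero]
  linarith

lemma integral_ibp {n : ℕ} {G ψ : Pt n → ℝ} (hG : ContDiffOn ℝ 1 G (halfSpace n))
    (hψ : ContDiff ℝ 1 ψ) (hc : HasCompactSupport ψ) (hs : tsupport ψ ⊆ halfSpace n) :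
    Integrable (fun p => pdT G p * ψ p + G p * pdT ψ p) volume ∧
    ∫ p in halfSpace n, (pdT G p * ψ p + G p * pdT ψ p) = 0 := by
  have hGc : ContinuousOn (pdT G) (halfSpace n) :=
    (hG.continuousOn_fderiv_of_isOpen (isOpen_halfSpace n) le_rfl).clm_apply continuousOn_const
  have hψc : Continuous (pdT ψ) := (hψ.continuous_fderiv one_ne_zero).clm_apply continuous_const
  have hts : tsupport (pdT ψ) ⊆ tsupport ψ := by
    refine (closure_minimal ?_ (isClosed_tsupport _)).trans (tsupport_fderiv_subset ℝ)
    intro p hp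
    apply subset_tsupport
    intro h
    apply hp
    simp [pdT, h]
  have hm := measurableSet_halfSpace n
  have i1 : Integrable (fun p => pdT G p * ψ p) volume :=
    locInt_mul (hGc.locallyIntegrableOn hm) hψ.continuous.continuousOn hc hs
  have i2 : Integrable (fun p => G p * pdT ψ p) volume :=
    locInt_mul (hG.continuousOn.locallyIntegrableOn hm) hψc.continuousOn
      (hc.of_isClosed_subset (isClosed_tsupport _) hts) (hts.trans hs)
  have i3 : Integrable (fun p => G p * ψ p) volume :=
    locInt_mul (hG.continuousOn.locallyIntegrableOn hm) hψ.continuous.continuousOn hc hs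
  refine ⟨i1.add i2, ?_⟩
  have key := integral_bilinear_hasFDerivAt_right_eq_neg_left_of_integrable (μ := volume)
    (f := G) (f' := fun p => fderiv ℝ G p) (g := ψ) (g' := fun p => fderiv ℝ ψ p)
    (v := ((1, 0) : Pt n)) (B := ContinuousLinearMap.mul ℝ ℝ) i1 i2 i3
    (fun x hx => ((hG.contDiffAt ((isOpen_halfSpace n).mem_nhds (hs hx))).differentiableAt
      one_ne_zero).hasFDerivAt)
    (fun x _ => (hψ.differentiable one_ne_zero x).hasFDerivAt)
  rw [setIntegral_eq_integral_of_forall_compl_eq_zero]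
  · rw [integral_add i1 i2]
    have key' : ∫ p, G p * pdT ψ p = - ∫ p, pdT G p * ψ p := key
    rw [key']; ring
  · intro p hp
    have h1 : ψ p = 0 := image_eq_zero_of_notMem_tsupport (fun h => hp (hs h))
    have h2 : pdT ψ p = 0 := image_eq_zero_of_notMem_tsupport (fun h => hp (hs (hts h)))
    simp [h1, h2]

lemma main_est {n : ℕ} {q c M : ℝ} (hq : 1 < q) (hq3 : q ≤ 3) (hc : 0 < c) (hM : 0 < M)
    (a : Fin n → Fin n → Pt n → ℝ)
    (hsym : ∀ i j, ∀ᵐ p ∂(volume.restrict (halfSpace n)), a i j p = a j i p)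
    (hform : ∀ᵐ p ∂(volume.restrict (halfSpace n)), ∀ ξ : Xn n,
      0 ≤ ∑ i, ∑ j, a i j p * ξ i * ξ j)
    (hbdd : ∀ i j, ∀ᵐ p ∂(volume.restrict (halfSpace n)), |a i j p| ≤ M)
    (w : Pt n → ℝ) (hw : ContDiffOn ℝ 1 w (halfSpace n)) (hw0 : ∀ p ∈ halfSpace n, 0 ≤ w p)
    (hloc : ∀ i, LocallyIntegrableOn (fun p => ∑ j, a i j p * pdX w j p) (halfSpace n) volume)
    (hweak : ∀ φ : Pt n → ℝ, ContDiff ℝ 1 φ → HasCompactSupport φ →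
      tsupport φ ⊆ halfSpace n → (∀ p, 0 ≤ φ p) →
      0 ≤ ∫ p in halfSpace n, ((pdT w p - c * w p ^ q) * φ p +
        ∑ i, (∑ j, a i j p * pdX w j p) * pdX φ i p)) :
    ∃ k : ℕ, 3 ≤ k ∧ ∃ C0 : ℝ, 0 ≤ C0 ∧ ∀ δ C : ℝ, 0 ≤ δ → 0 ≤ C →
      (∀ y : ℝ, 0 ≤ y → y + y ^ (1 - (q - 1) / 4) + y ^ (1 + (q - 1) / 4) ≤ δ + C * y ^ q) →
      ∀ R τ ε : ℝ, 1 ≤ R → 0 < τ → 0 < ε →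
      c * ∫ p in halfSpace n, w p ^ q * cutPsi τ R k p ≤
        C0 * ((δ + C * 2 ^ q * ε ^ q) * ((R ^ (-2 / (q - 1))) ^ q * volume.real (regZ n τ R)) +
          C * 2 ^ q * ∫ p in halfSpace n,
            {p : Pt n | R ^ 2 ≤ p.1 + ‖p.2‖ ^ 2}.indicator (fun p => w p ^ q * cutPsi τ R k p) p) := by
  set ν := (q - 1) / 4 with hνd
  have hν : 0 < ν := by rw [hνd]; linarith
  have hν1 : ν ≤ 1 / 2 := by rw [hνd]; linarith
  obtain ⟨k0, hk0⟩ := exists_nat_ge (2 * q / (q - 1 - ν))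
  obtain ⟨D, hD, hDb⟩ := cutE_bounds
  set k := k0 + 3 with hkd
  have hk3 : 3 ≤ k := by omega
  have hk : (k : ℝ) * (1 + ν) / q ≤ k - 2 := by
    have h1 : 0 < q - 1 - ν := by rw [hνd]; linarith
    rw [div_le_iff₀ h1] at hk0
    rw [div_le_iff₀ (by linarith)]
    have : (k : ℝ) = k0 + 3 := by rw [hkd]; push_cast; ring
    rw [this]
    nlinarith
  set C0 := 2 * k * D + k ^ 2 * (n ^ 2 * M * D ^ 2) / (2 * ν) with hC0
  have hC0n : 0 ≤ C0 := by positivity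
  refine ⟨k, hk3, C0, hC0n, fun δ C hδ hC hyp R τ ε hR hτ hε => ?_⟩
  have hR0 : 0 < R := by linarith
  set m := R ^ (-2 / (q - 1)) with hmd
  have hm : 0 < m := by positivity
  have hmR : m ^ (q - 1) = (R ^ 2)⁻¹ := by
    rw [hmd, ← Real.rpow_mul hR0.le, div_mul_cancel₀ _ (by linarith), Real.rpow_neg hR0.le]
    norm_num
  set ψ : Pt n → ℝ := cutPsi τ R k with hψd
  set T : Set (Pt n) := {p : Pt n | R ^ 2 ≤ p.1 + ‖p.2‖ ^ 2} with hTd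
  have hTm : MeasurableSet T :=
    (isClosed_le continuous_const (g := fun p : Pt n => p.1 + ‖p.2‖ ^ 2)
      (by fun_prop)).measurableSet
  have hS := isOpen_halfSpace n
  have hSm := measurableSet_halfSpace n
  have hψC : ContDiff ℝ 1 ψ := cutPsi_contDiff τ R k
  have hψZ : tsupport ψ ⊆ regZ n τ R := cutPsi_tsupport hτ hR0 (by omega)
  have hZS : regZ n τ R ⊆ halfSpace n := fun p hp => lt_of_lt_of_le hτ hp.1
  have hψs : tsupport ψ ⊆ halfSpace n := hψZ.trans hZS
  have hψc : HasCompactSupport ψ :=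
    (regZ_compact n hτ.le hR0).of_isClosed_subset (isClosed_tsupport _) hψZ
  set z : Pt n → ℝ := fun p => w p / m + ε with hzd
  have hz : ∀ p ∈ halfSpace n, 0 < z p := fun p hp => by
    have := hw0 p hp
    simp only [hzd]; positivity
  have hzC : ContDiffOn ℝ 1 z (halfSpace n) := (hw.div_const m).add contDiffOn_const
  set F : Pt n → ℝ := fun p => 1 + z p ^ (-ν) with hFd
  set G : Pt n → ℝ := fun p => m * (z p + z p ^ (1 - ν) / (1 - ν)) with hGd
  have hFC : ContDiffOn ℝ 1 F (halfSpace n) :=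
    contDiffOn_const.add (hzC.rpow_const_of_ne (fun p hp => (hz p hp).ne'))
  have hGC : ContDiffOn ℝ 1 G (halfSpace n) :=
    contDiffOn_const.mul (hzC.add ((hzC.rpow_const_of_ne (fun p hp => (hz p hp).ne')).div_const _))
  have hwD : ∀ p ∈ halfSpace n, HasFDerivAt w (fderiv ℝ w p) p := fun p hp =>
    ((hw.contDiffAt (hS.mem_nhds hp)).differentiableAt one_ne_zero).hasFDerivAt
  have hzD : ∀ p ∈ halfSpace n, HasFDerivAt z (m⁻¹ • fderiv ℝ w p) p := fun p hp => by
    simp only [hzd, div_eq_mul_inv]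
    exact ((hwD p hp).mul_const _).add_const _
  have hFD : ∀ p ∈ halfSpace n, HasFDerivAt F ((-ν * z p ^ (-ν - 1)) • (m⁻¹ • fderiv ℝ w p)) p :=
    fun p hp => by
      have h1 : HasDerivAt (fun s : ℝ => 1 + s ^ (-ν)) (-ν * z p ^ (-ν - 1)) (z p) :=
        (Real.hasDerivAt_rpow_const (Or.inl (hz p hp).ne')).const_add _
      exact h1.comp_hasFDerivAt p (hzD p hp)
  have hGD : ∀ p ∈ halfSpace n, HasFDerivAt G ((m * F p) • (m⁻¹ • fderiv ℝ w p)) p :=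
    fun p hp => by
      have h1 : HasDerivAt (fun s : ℝ => m * (s + s ^ (1 - ν) / (1 - ν))) (m * F p) (z p) := by
        have h2 := ((hasDerivAt_id (z p)).add ((Real.hasDerivAt_rpow_const (p := 1 - ν)
          (Or.inl (hz p hp).ne')).div_const (1 - ν))).const_mul m
        have h3 : (1 - ν) ≠ 0 := by linarith
        have e : m * F p = m * (1 + (1 - ν) * z p ^ (1 - ν - 1) / (1 - ν)) := by
          rw [mul_div_cancel_left₀ _ h3]
          simp only [hFd]
          rw [show 1 - ν - 1 = -ν by ring]
        rw [e]
        exact h2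
      exact h1.comp_hasFDerivAt p (hzD p hp)
  have hGT : ∀ p ∈ halfSpace n, pdT G p = F p * pdT w p := fun p hp => by
    unfold pdT
    rw [(hGD p hp).fderiv]
    simp
    field_simp
  set φ : Pt n → ℝ := fun p => F p * ψ p with hφd
  have hφC : ContDiff ℝ 1 φ := contDiff_mul_cut hFC hψC hψs
  have hφt : tsupport φ ⊆ tsupport ψ := tsupport_mul_cut F ψ
  have hφc : HasCompactSupport φ := hψc.of_isClosed_subset (isClosed_tsupport _) hφt
  have hφ0 : ∀ p, 0 ≤ φ p := fun p => by
    by_cases hp : p ∈ halfSpace n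
    · have := hz p hp
      have h2 := (cutPsi_mem τ R k p).1
      simp only [hφd, hFd]
      positivity
    · have : ψ p = 0 := image_eq_zero_of_notMem_tsupport (fun h => hp (hψs h))
      simp [hφd, this]
  have hφX : ∀ p ∈ halfSpace n, ∀ i, pdX φ i p =
      F p * pdX ψ i p - ν * z p ^ (-ν - 1) / m * pdX w i p * ψ p := fun p hp i => by
    unfold pdX
    have := ((hFD p hp).mul (hψC.differentiable one_ne_zero p).hasFDerivAt).fderiv
    have h2 : φ = F * ψ := rfl
    rw [h2, this]
    simp
    ring
  have hwk := hweak φ hφC hφc (hφt.trans hψs) hφ0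
  obtain ⟨hibp_int, hibp⟩ := integral_ibp hGC hψC hψc hψs
  -- integrability
  have hwqc : ContinuousOn (fun p => w p ^ q) (halfSpace n) :=
    hw.continuousOn.rpow_const (fun p _ => Or.inr (by linarith))
  have hwTc : ContinuousOn (pdT w) (halfSpace n) :=
    (hw.continuousOn_fderiv_of_isOpen hS le_rfl).clm_apply continuousOn_const
  have hXc : ∀ i, Continuous (pdX φ i) := fun i =>
    (hφC.continuous_fderiv one_ne_zero).clm_apply continuous_const
  have htX : ∀ i, tsupport (pdX φ i) ⊆ tsupport φ := fun i => by
    refine (closure_minimal ?_ (isClosed_tsupport _)).trans (tsupport_fderiv_subset ℝ)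
    intro p hp
    apply subset_tsupport
    intro h
    apply hp
    simp [pdX, h]
  have int1 : Integrable (fun p => (pdT w p - c * w p ^ q) * φ p +
        ∑ i, (∑ j, a i j p * pdX w j p) * pdX φ i p) volume := by
    apply Integrable.add
    · exact locInt_mul ((hwTc.sub (continuousOn_const.mul hwqc)).locallyIntegrableOn hSm)
        hφC.continuous.continuousOn hφc (hφt.trans hψs)
    · apply integrable_finsetSum
      intro i _
      exact locInt_mul (hloc i) (hXc i).continuousOn
        (hφc.of_isClosed_subset (isClosed_tsupport _) (htX i)) ((htX i).trans (hφt.trans hψs))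
  have int2 : Integrable (fun p => w p ^ q * ψ p) volume :=
    locInt_mul (hwqc.locallyIntegrableOn hSm) hψC.continuous.continuousOn hψc hψs
  have int3 : Integrable (T.indicator (fun p => w p ^ q * ψ p)) volume := int2.indicator hTm
  have hZfin : volume (regZ n τ R) ≠ ⊤ := (regZ_compact n hτ.le hR0).measure_lt_top.ne
  have hZm : MeasurableSet (regZ n τ R) := (regZ_closed n τ R).measurableSet
  have int4 : Integrable ((regZ n τ R).indicator (fun _ : Pt n => (1 : ℝ))) volume :=
    (integrable_indicator_iff hZm).2 (integrableOn_const hZfin)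
  have hpw : ∀ᵐ p ∂(volume.restrict (halfSpace n)),
      ((pdT w p - c * w p ^ q) * φ p + ∑ i, (∑ j, a i j p * pdX w j p) * pdX φ i p)
        - (pdT G p * ψ p + G p * pdT ψ p) ≤
      -(c * (w p ^ q * ψ p)) + C0 * ((δ + C * 2 ^ q * ε ^ q) * (m ^ q *
        (regZ n τ R).indicator (fun _ : Pt n => (1 : ℝ)) p) +
        C * 2 ^ q * T.indicator (fun p => w p ^ q * ψ p) p) := by
    have hsym' : ∀ᵐ p ∂(volume.restrict (halfSpace n)), ∀ i j, a i j p = a j i p :=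
      ae_all_iff.2 fun i => ae_all_iff.2 fun j => hsym i j
    have hbdd' : ∀ᵐ p ∂(volume.restrict (halfSpace n)), ∀ i j, |a i j p| ≤ M :=
      ae_all_iff.2 fun i => ae_all_iff.2 fun j => hbdd i j
    filter_upwards [hsym', hbdd', hform, ae_restrict_mem hSm] with p hs1 hb1 hf1 hp
    have hwp := hw0 p hp
    have hψ0 := (cutPsi_mem τ R k p).1
    have hψ1 := (cutPsi_mem τ R k p).2
    have hi3 : 0 ≤ T.indicator (fun p => w p ^ q * ψ p) p := by
      apply Set.indicator_apply_nonneg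
      intro _
      positivity
    by_cases hpZ : p ∈ regZ n τ R
    · rw [Set.indicator_of_mem hpZ, mul_one]
      have hψT : pdT ψ p = pdT (cutC τ) p * cutE R p ^ k
          + cutC τ p * (k * cutE R p ^ (k - 1) * pdT (cutE R) p) := fderiv_cutPsi τ R k p _
      have hψX : ∀ i, pdX ψ i p = cutC τ p * (k * cutE R p ^ (k - 1) * pdX (cutE R) i p) := fun i => by
        have h1 : pdX ψ i p = pdX (cutC τ) i p * cutE R p ^ k
          + cutC τ p * (k * cutE R p ^ (k - 1) * pdX (cutE R) i p) := fderiv_cutPsi τ R k p _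
        rw [h1, pdX_cutC]; ring
      have hLHS : ((pdT w p - c * w p ^ q) * φ p + ∑ i, (∑ j, a i j p * pdX w j p) * pdX φ i p)
          - (pdT G p * ψ p + G p * pdT ψ p) =
          -(c * w p ^ q * ((1 + z p ^ (-ν)) * (cutC τ p * cutE R p ^ k)))
          - m * (z p + z p ^ (1 - ν) / (1 - ν)) * (pdT (cutC τ) p * cutE R p ^ k
            + cutC τ p * (k * cutE R p ^ (k - 1) * pdT (cutE R) p))
          + ∑ i, (∑ j, a i j p * pdX w j p) *
            ((1 + z p ^ (-ν)) * (cutC τ p * (k * cutE R p ^ (k - 1) * pdX (cutE R) i p))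
            - ν * z p ^ (-ν - 1) / m * pdX w i p * (cutC τ p * cutE R p ^ k)) := by
        have hφX' : ∀ i, pdX φ i p = (1 + z p ^ (-ν)) *
            (cutC τ p * (k * cutE R p ^ (k - 1) * pdX (cutE R) i p))
            - ν * z p ^ (-ν - 1) / m * pdX w i p * (cutC τ p * cutE R p ^ k) := fun i => by
          rw [hφX p hp i, hψX i]; rfl
        simp only [hφX', hGT p hp, hψT]
        simp only [hφd, hFd, hGd, hψd, cutPsi]
        ring
      rw [hLHS]
      obtain ⟨hb2, hb3, hb4⟩ := hDb n R hR0 p (le_of_lt hp)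
      by_cases hpT : p ∈ T
      · rw [Set.indicator_of_mem hpT]
        have hmain := pw_est (c := c) (w := w p) (χ := cutC τ p) (χt := pdT (cutC τ) p)
          (ηt := pdT (cutE R) p) (B1 := D / R) hq hν hν1 hk hk3 (hz p hp) (cutE_mem R p).1
          (cutE_mem R p).2 hm hD.le hM.le hc.le hwp (cutC_mem τ p).1 (pdT_cutC hτ p) hyp
          (fun i j => a i j p) hs1 hf1 hb1 (fun j => pdX w j p) (fun i => pdX (cutE R) i p)
          (by rw [hmR, ← div_eq_mul_inv]; exact hb2) hb3 (by positivity)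
          (by rw [hmR, ← div_eq_mul_inv, div_pow])
        refine hmain.trans ?_
        have e1 : -(c * w p ^ q * (cutC τ p * cutE R p ^ k)) = -(c * (w p ^ q * ψ p)) := by
          simp only [hψd, cutPsi]; ring
        rw [e1]
        refine add_le_add_right ?_ _
        have hzq : m ^ q * z p ^ q ≤ 2 ^ q * (w p ^ q + m ^ q * ε ^ q) := by
          rw [← Real.mul_rpow hm.le (hz p hp).le, ← Real.mul_rpow hm.le hε.le]
          have : m * z p = w p + m * ε := by simp only [hzd]; field_simp
          rw [this]
          exact two_rpow hq hwp (by positivity)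
        have hχ := cutC_mem τ p
        calc cutC τ p * (C0 * m ^ q * (δ + C * (z p ^ q * cutE R p ^ k)))
            = C0 * (cutC τ p * (δ * m ^ q) + C * (m ^ q * z p ^ q) * ψ p) := by
              simp only [hψd, cutPsi]; ring
          _ ≤ C0 * (1 * (δ * m ^ q) + C * (2 ^ q * (w p ^ q + m ^ q * ε ^ q)) * ψ p) := by
              gcongr
              exact hχ.2
          _ = C0 * (δ * m ^ q + C * 2 ^ q * (w p ^ q * ψ p) + C * 2 ^ q * ε ^ q * m ^ q * ψ p) := by
              ring
          _ ≤ C0 * (δ * m ^ q + C * 2 ^ q * (w p ^ q * ψ p) + C * 2 ^ q * ε ^ q * m ^ q * 1) := by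
              gcongr
          _ = _ := by ring
      · rw [Set.indicator_of_notMem hpT]
        obtain ⟨hb5, hb6⟩ := hb4 (not_le.1 hpT)
        simp only [hb5, hb6]
        refine (pw_est0 (q := q) (c := c) (w := w p) hν hν1 (hz p hp) (cutE_mem R p).1 hm hc.le hwp
          (cutC_mem τ p).1 (pdT_cutC hτ p) (fun i j => a i j p) hf1 (fun j => pdX w j p)).trans ?_
        have e1 : -(c * w p ^ q * (cutC τ p * cutE R p ^ k)) = -(c * (w p ^ q * ψ p)) := by
          simp only [hψd, cutPsi]; ring
        rw [e1]
        have : 0 ≤ C0 * ((δ + C * 2 ^ q * ε ^ q) * m ^ q + C * 2 ^ q * 0) := by positivity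
        linarith
    · have hpt : p ∉ tsupport ψ := fun h => hpZ (hψZ h)
      have z1 : ψ p = 0 := image_eq_zero_of_notMem_tsupport hpt
      have z2 : φ p = 0 := by simp [hφd, z1]
      have z3 : ∀ i, pdX φ i p = 0 := fun i =>
        image_eq_zero_of_notMem_tsupport (fun h => hpt (hφt (htX i h)))
      have z4 : pdT ψ p = 0 := by
        have : p ∉ tsupport (fderiv ℝ ψ) := fun h => hpt (tsupport_fderiv_subset ℝ h)
        unfold pdT
        rw [image_eq_zero_of_notMem_tsupport this]; simp
      simp only [z1, z2, z3, z4, Set.indicator_of_notMem hpZ]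
      have : 0 ≤ C0 * (C * 2 ^ q * T.indicator (fun p => w p ^ q * ψ p) p) := by positivity
      simpa using this
  have hfin := integral_mono_ae (int1.restrict.sub hibp_int.restrict)
    ((int2.restrict.const_mul c).neg.add (((((int4.restrict (s := halfSpace n)).const_mul (m ^ q)).const_mul
      (δ + C * 2 ^ q * ε ^ q)).add (int3.restrict.const_mul (C * 2 ^ q))).const_mul C0)) hpw
  simp only [Pi.sub_apply, Pi.add_apply, Pi.neg_apply] at hfin
  rw [integral_sub int1.restrict hibp_int.restrict, hibp, sub_zero] at hfin
  have j2 : Integrable (fun p => -(c * (w p ^ q * ψ p))) (volume.restrict (halfSpace n)) :=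
    (int2.restrict.const_mul c).neg
  have j4 : Integrable (fun p => (δ + C * 2 ^ q * ε ^ q) * (m ^ q *
      (regZ n τ R).indicator (fun _ : Pt n => (1 : ℝ)) p)) (volume.restrict (halfSpace n)) :=
    ((int4.restrict (s := halfSpace n)).const_mul (m ^ q)).const_mul (δ + C * 2 ^ q * ε ^ q)
  have j3 : Integrable (fun p => C * 2 ^ q * T.indicator (fun p => w p ^ q * ψ p) p)
      (volume.restrict (halfSpace n)) := int3.restrict.const_mul (C * 2 ^ q)
  have j5 : Integrable (fun p => C0 * ((δ + C * 2 ^ q * ε ^ q) * (m ^ q *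
      (regZ n τ R).indicator (fun _ : Pt n => (1 : ℝ)) p) +
        C * 2 ^ q * T.indicator (fun p => w p ^ q * ψ p) p)) (volume.restrict (halfSpace n)) :=
    (j4.add j3).const_mul C0
  have hvol : ∫ p in halfSpace n, (regZ n τ R).indicator (fun _ : Pt n => (1 : ℝ)) p =
      volume.real (regZ n τ R) := by
    rw [integral_indicator hZm, Measure.restrict_restrict hZm, Set.inter_eq_left.2 hZS]
    simp
  rw [integral_add j2 j5, integral_neg, integral_const_mul, integral_const_mul,
    integral_add j4 j3, integral_const_mul, integral_const_mul, integral_const_mul, hvol] at hfin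
  linarith
lemma vol_bound {n : ℕ} {q V R v : ℝ} (hn : 1 ≤ n) (hq : 1 < q) (hq2 : q ≤ 1 + 2 / n) (hV : 0 ≤ V)
    (hR : 1 ≤ R) (hv : v ≤ V * R ^ (n + 2)) : (R ^ (-2 / (q - 1))) ^ q * v ≤ V := by
  have hR0 : 0 < R := by linarith
  have hn' : (0 : ℝ) < n := by exact_mod_cast hn
  have hq1 : 0 < q - 1 := by linarith
  have e : (R ^ (-2 / (q - 1))) ^ q * R ^ (n + 2) ≤ 1 := by
    rw [← Real.rpow_mul hR0.le, ← Real.rpow_natCast R (n + 2), ← Real.rpow_add hR0]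
    apply Real.rpow_le_one_of_one_le_of_nonpos hR
    have h1 : (q - 1) * n ≤ 2 := by
      have : q - 1 ≤ 2 / n := by linarith
      rwa [le_div_iff₀ hn'] at this
    have h2 : -2 / (q - 1) * q + ((n + 2 : ℕ) : ℝ) = ((q - 1) * n - 2) / (q - 1) := by
      push_cast
      field_simp
      ring
    rw [h2]
    exact div_nonpos_of_nonpos_of_nonneg (by linarith) hq1.le
  calc _ ≤ (R ^ (-2 / (q - 1))) ^ q * (V * R ^ (n + 2)) := by gcongr
    _ = V * ((R ^ (-2 / (q - 1))) ^ q * R ^ (n + 2)) := by ring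
    _ ≤ V * 1 := by gcongr
    _ = V := mul_one V

lemma cut_eventually {n : ℕ} (k : ℕ) (p : Pt n) (hp : p ∈ halfSpace n) :
    ∀ᶠ j : ℕ in atTop, 2 * (1 / ((j : ℝ) + 1)) ≤ p.1 ∧ p.1 + ‖p.2‖ ^ 2 < ((j : ℝ) + 1) ^ 2 := by
  have hp' : 0 < p.1 := hp
  have h1 : Tendsto (fun j : ℕ => 2 * (1 / ((j : ℝ) + 1))) atTop (𝓝 (2 * 0)) :=
    tendsto_one_div_add_atTop_nhds_zero_nat.const_mul 2
  rw [mul_zero] at h1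
  have h2 := h1.eventually (ge_mem_nhds hp')
  have h3 := tendsto_natCast_atTop_atTop (R := ℝ) |>.eventually
    (eventually_gt_atTop (p.1 + ‖p.2‖ ^ 2))
  filter_upwards [h2, h3] with j a1 a2
  refine ⟨a1, ?_⟩
  have : (0 : ℝ) ≤ j := j.cast_nonneg
  nlinarith

lemma liouville_core {n : ℕ} {q c M : ℝ} (hn : 1 ≤ n) (hq : 1 < q) (hq2 : q ≤ 1 + 2 / n)
    (hc : 0 < c) (hM : 0 < M)
    (a : Fin n → Fin n → Pt n → ℝ)
    (hsym : ∀ i j, ∀ᵐ p ∂(volume.restrict (halfSpace n)), a i j p = a j i p)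
    (hform : ∀ᵐ p ∂(volume.restrict (halfSpace n)), ∀ ξ : Xn n,
      0 ≤ ∑ i, ∑ j, a i j p * ξ i * ξ j)
    (hbdd : ∀ i j, ∀ᵐ p ∂(volume.restrict (halfSpace n)), |a i j p| ≤ M)
    (w : Pt n → ℝ) (hw : ContDiffOn ℝ 1 w (halfSpace n)) (hw0 : ∀ p ∈ halfSpace n, 0 ≤ w p)
    (hloc : ∀ i, LocallyIntegrableOn (fun p => ∑ j, a i j p * pdX w j p) (halfSpace n) volume)
    (hweak : ∀ φ : Pt n → ℝ, ContDiff ℝ 1 φ → HasCompactSupport φ →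
      tsupport φ ⊆ halfSpace n → (∀ p, 0 ≤ φ p) →
      0 ≤ ∫ p in halfSpace n, ((pdT w p - c * w p ^ q) * φ p +
        ∑ i, (∑ j, a i j p * pdX w j p) * pdX φ i p)) :
    ∀ p ∈ halfSpace n, w p = 0 := by
  have hn' : (1 : ℝ) ≤ n := by exact_mod_cast hn
  have hq3 : q ≤ 3 := by
    have : (2 : ℝ) / n ≤ 2 := by
      rw [div_le_iff₀ (by linarith)]; linarith
    linarith
  have hS := isOpen_halfSpace n
  have hSm := measurableSet_halfSpace n
  obtain ⟨k, hk3, C0, hC0, hmain⟩ := main_est hq hq3 hc hM a hsym hform hbdd w hw hw0 hloc hweak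
  obtain ⟨V, hV, hVb⟩ := regZ_vol n
  have hν : 0 < (q - 1) / 4 := by linarith
  have hν1 : (q - 1) / 4 < 1 := by linarith
  have hνq : 1 + (q - 1) / 4 < q := by linarith
  have hwqc : ContinuousOn (fun p => w p ^ q) (halfSpace n) :=
    hw.continuousOn.rpow_const (fun p _ => Or.inr (by linarith))
  have hwq0 : ∀ p ∈ halfSpace n, 0 ≤ w p ^ q := fun p hp => Real.rpow_nonneg (hw0 p hp) q
  set μ := volume.restrict (halfSpace n) with hμ
  set τ : ℕ → ℝ := fun j => 1 / ((j : ℝ) + 1) with hτd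
  set R : ℕ → ℝ := fun j => (j : ℝ) + 1 with hRd
  have hτ : ∀ j, 0 < τ j := fun j => by simp only [hτd]; positivity
  have hR : ∀ j, 1 ≤ R j := fun j => by
    have : (0 : ℝ) ≤ j := j.cast_nonneg
    simp only [hRd]; linarith
  have hR0 : ∀ j, 0 < R j := fun j => by linarith [hR j]
  set T : ℕ → Set (Pt n) := fun j => {p : Pt n | R j ^ 2 ≤ p.1 + ‖p.2‖ ^ 2} with hTd
  have hTm : ∀ j, MeasurableSet (T j) := fun j =>
    (isClosed_le continuous_const (g := fun p : Pt n => p.1 + ‖p.2‖ ^ 2)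
      (by fun_prop)).measurableSet
  have hvb : ∀ j, (R j ^ (-2 / (q - 1))) ^ q * volume.real (regZ n (τ j) (R j)) ≤ V := fun j =>
    vol_bound hn hq hq2 hV (hR j) (hVb _ _ (hτ j).le (hR0 j))
  have hwpsi : ∀ j, Integrable (fun p => w p ^ q * cutPsi (τ j) (R j) k p) volume := fun j => by
    have hψZ : tsupport (cutPsi (τ j) (R j) k) ⊆ regZ n (τ j) (R j) :=
      cutPsi_tsupport (hτ j) (hR0 j) (by omega)
    refine locInt_mul (hwqc.locallyIntegrableOn hSm) (cutPsi_contDiff _ _ k).continuous.continuousOn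
      ((regZ_compact n (hτ j).le (hR0 j)).of_isClosed_subset (isClosed_tsupport _) hψZ)
      (hψZ.trans fun p hp => lt_of_lt_of_le (hτ j) hp.1)
  have hψ0 : ∀ j p, 0 ≤ cutPsi (n := n) (τ j) (R j) k p := fun j p => (cutPsi_mem _ _ k p).1
  have hψ1 : ∀ j p, cutPsi (n := n) (τ j) (R j) k p ≤ 1 := fun j p => (cutPsi_mem _ _ k p).2
  have hnn : ∀ j, ∀ p ∈ halfSpace n, 0 ≤ w p ^ q * cutPsi (τ j) (R j) k p := fun j p hp =>
    mul_nonneg (hwq0 p hp) (hψ0 j p)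
  have h2q : (0 : ℝ) < 2 ^ q := by positivity
  -- Step A
  have hA : ∃ I : ℝ, ∀ j, ∫ p, w p ^ q * cutPsi (τ j) (R j) k p ∂μ ≤ I := by
    set δ := c / (2 * (C0 + 1) * 2 ^ q) with hδ
    have hδ0 : 0 < δ := by positivity
    obtain ⟨C, hC, hCb⟩ := scal_A hν hν1 hνq hδ0
    refine ⟨C0 * ((C + δ * 2 ^ q * 1 ^ q) * V) / (c / 2), fun j => ?_⟩
    have h1 := hmain C δ hC hδ0.le hCb (R j) (τ j) 1 (hR j) (hτ j) one_pos
    have h2 : ∫ p, (T j).indicator (fun p => w p ^ q * cutPsi (τ j) (R j) k p) p ∂μ ≤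
        ∫ p, w p ^ q * cutPsi (τ j) (R j) k p ∂μ := by
      refine integral_mono_ae ((hwpsi j).indicator (hTm j)).restrict (hwpsi j).restrict ?_
      filter_upwards [ae_restrict_mem hSm] with p hp
      exact Set.indicator_apply_le' (fun _ => le_rfl) (fun _ => hnn j p hp)
    set J := ∫ p, w p ^ q * cutPsi (τ j) (R j) k p ∂μ with hJ
    have hJ0 : 0 ≤ J := setIntegral_nonneg hSm (hnn j)
    have h3 : C0 * (δ * 2 ^ q) ≤ c / 2 := by
      have : C0 * (δ * 2 ^ q) = c / 2 * (C0 / (C0 + 1)) := by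
        rw [hδ]; field_simp
      rw [this]
      have : C0 / (C0 + 1) ≤ 1 := by
        rw [div_le_one (by linarith)]; linarith
      nlinarith
    rw [le_div_iff₀ (by linarith)]
    have h4 : c * J ≤ C0 * ((C + δ * 2 ^ q * 1 ^ q) * V + δ * 2 ^ q * J) := by
      refine h1.trans ?_
      gcongr
      exact hvb j
    have h5 : C0 * (δ * 2 ^ q) * J ≤ c / 2 * J := by gcongr
    nlinarith
  have hwint : Integrable (fun p => w p ^ q) μ := by
    obtain ⟨I, hI⟩ := hA
    set Φ : ℕ → Set (Pt n) := fun j => {p : Pt n | 2 * τ j ≤ p.1 ∧ p.1 + ‖p.2‖ ^ 2 ≤ R j ^ 2} with hΦ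
    have hΦm : ∀ j, MeasurableSet (Φ j) := fun j =>
      ((isClosed_le continuous_const continuous_fst).inter (isClosed_le
        (f := fun p : Pt n => p.1 + ‖p.2‖ ^ 2) (by fun_prop) continuous_const)).measurableSet
    have hcov : AECover μ atTop Φ := by
      refine ⟨?_, hΦm⟩
      filter_upwards [ae_restrict_mem hSm] with p hp
      filter_upwards [cut_eventually k p hp] with j hj
      exact ⟨hj.1, hj.2.le⟩
    have heq : ∀ j, Set.EqOn (fun p => w p ^ q * cutPsi (τ j) (R j) k p) (fun p => w p ^ q) (Φ j) := by
      intro j p hp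
      simp only
      rw [cutPsi_one k (hτ j) (hR0 j) hp.1 hp.2, mul_one]
    refine hcov.integrable_of_integral_bounded_of_nonneg_ae I ?_ ?_ ?_
    · intro j
      exact ((hwpsi j).restrict (s := halfSpace n)).integrableOn.congr_fun (heq j) (hΦm j)
    · filter_upwards [ae_restrict_mem hSm] with p hp using hwq0 p hp
    · refine Eventually.of_forall fun j => ?_
      rw [← setIntegral_congr_fun (hΦm j) (heq j)]
      refine (setIntegral_le_integral (hwpsi j).restrict ?_).trans (hI j)
      filter_upwards [ae_restrict_mem hSm] with p hp using hnn j p hp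
  -- Step B
  have hlim1 : Tendsto (fun j => ∫ p, w p ^ q * cutPsi (τ j) (R j) k p ∂μ) atTop
      (𝓝 (∫ p, w p ^ q ∂μ)) := by
    refine tendsto_integral_of_dominated_convergence (fun p => w p ^ q)
      (fun j => (hwpsi j).restrict.aestronglyMeasurable) hwint (fun j => ?_) ?_
    · filter_upwards [ae_restrict_mem hSm] with p hp
      rw [Real.norm_of_nonneg (hnn j p hp)]
      exact mul_le_of_le_one_right (hwq0 p hp) (hψ1 j p)
    · filter_upwards [ae_restrict_mem hSm] with p hp
      refine tendsto_const_nhds.congr' ?_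
      filter_upwards [cut_eventually k p hp] with j hj
      rw [cutPsi_one k (hτ j) (hR0 j) hj.1 hj.2.le, mul_one]
  have hlim2 : Tendsto (fun j => ∫ p, (T j).indicator
      (fun p => w p ^ q * cutPsi (τ j) (R j) k p) p ∂μ) atTop (𝓝 (∫ _p, (0 : ℝ) ∂μ)) := by
    refine tendsto_integral_of_dominated_convergence (fun p => w p ^ q)
      (fun j => ((hwpsi j).indicator (hTm j)).restrict.aestronglyMeasurable) hwint (fun j => ?_) ?_
    · filter_upwards [ae_restrict_mem hSm] with p hp
      refine (norm_indicator_le_norm_self _ _).trans ?_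
      rw [Real.norm_of_nonneg (hnn j p hp)]
      exact mul_le_of_le_one_right (hwq0 p hp) (hψ1 j p)
    · filter_upwards [ae_restrict_mem hSm] with p hp
      refine tendsto_const_nhds.congr' ?_
      filter_upwards [cut_eventually k p hp] with j hj
      rw [Set.indicator_of_notMem]
      exact not_le.2 hj.2
  rw [integral_zero] at hlim2
  have hB : ∀ δ : ℝ, 0 < δ → c * ∫ p, w p ^ q ∂μ ≤ C0 * (2 * δ * V) := by
    intro δ hδ
    obtain ⟨C, hC, hCb⟩ := scal_B hν hν1 hνq hδ
    obtain ⟨ε, hε, hεb⟩ : ∃ ε : ℝ, 0 < ε ∧ C * 2 ^ q * ε ^ q ≤ δ := by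
      refine ⟨(δ / (C * 2 ^ q + 1)) ^ (1 / q), by positivity, ?_⟩
      rw [← Real.rpow_mul (by positivity), one_div_mul_cancel (by linarith), Real.rpow_one,
        ← mul_div_assoc, div_le_iff₀ (by positivity)]
      nlinarith
    have h1 := hlim1.const_mul c
    have h2 : Tendsto (fun j => C0 * (2 * δ * V + C * 2 ^ q * ∫ p, (T j).indicator
      (fun p => w p ^ q * cutPsi (τ j) (R j) k p) p ∂μ)) atTop
      (𝓝 (C0 * (2 * δ * V + C * 2 ^ q * 0))) :=
      ((hlim2.const_mul _).const_add _).const_mul _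
    have h3 := le_of_tendsto_of_tendsto' h1 h2 (fun j => by
      refine (hmain δ C hδ.le hC hCb (R j) (τ j) ε (hR j) (hτ j) hε).trans ?_
      gcongr C0 * (?_ + _)
      have := hvb j
      have h5 : 0 ≤ (R j ^ (-2 / (q - 1))) ^ q * volume.real (regZ n (τ j) (R j)) := by
        have := hR0 j
        positivity
      gcongr
      linarith)
    simpa using h3
  have hI0 : ∫ p, w p ^ q ∂μ = 0 := by
    have h0 : 0 ≤ ∫ p, w p ^ q ∂μ := setIntegral_nonneg hSm hwq0
    have h1 : c * ∫ p, w p ^ q ∂μ ≤ 0 := by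
      apply le_of_forall_pos_le_add
      intro e he
      have h2 := hB (e / (2 * (C0 * V + 1))) (by positivity)
      refine h2.trans ?_
      have : C0 * (2 * (e / (2 * (C0 * V + 1))) * V) = e * (C0 * V) / (C0 * V + 1) := by
        field_simp
      rw [this, zero_add, div_le_iff₀ (by positivity)]
      nlinarith
    nlinarith
  have hae : (fun p => w p ^ q) =ᵐ[μ] fun _ => (0 : ℝ) := by
    refine (integral_eq_zero_iff_of_nonneg_ae ?_ hwint).1 hI0
    filter_upwards [ae_restrict_mem hSm] with p hp using hwq0 p hp
  have hall := Measure.eqOn_open_of_ae_eq hae hS hwqc continuousOn_const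
  intro p hp
  have := hall hp
  simp only at this
  exact (Real.rpow_eq_zero (hw0 p hp) (by linarith)).1 this

lemma coef_locInt {n : ℕ} {b f : Pt n → ℝ} (hb : Measurable b)
    (hbb : ∀ K : Set (Pt n), IsCompact K → K ⊆ halfSpace n → ∃ M, ∀ p ∈ K, |b p| ≤ M)
    (hf : ContinuousOn f (halfSpace n)) :
    LocallyIntegrableOn (fun p => b p * f p) (halfSpace n) volume := by
  rw [locallyIntegrableOn_iff (isOpen_halfSpace n).isLocallyClosed]
  intro K hK hKc
  obtain ⟨M, hM⟩ := hbb K hKc hK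
  have h1 : IntegrableOn f K volume := (hf.mono hK).integrableOn_compact hKc
  refine Integrable.bdd_mul (c := M) h1 hb.aestronglyMeasurable ?_
  filter_upwards [ae_restrict_mem hKc.measurableSet] with p hp using hM p hp

lemma oddPow_cont {q : ℝ} (hq : 1 < q) : Continuous (oddPow q) := by
  unfold oddPow
  exact (continuous_abs.rpow_const (fun _ => Or.inr (by linarith))).mul continuous_id

/-- the Liouville comparison principle for globally bounded
coefficients (Corollary 1), with the classical Fujita exponent `1 + 2/n`. -/
theorem liouville_comparison_bounded_coefficients
    (n : ℕ) (hn : 1 ≤ n) (q : ℝ)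
    (hq1 : 1 < q) (hq2 : q ≤ 1 + 2 / n)
    (a : Fin n → Fin n → Pt n → ℝ) (A : Pt n → ℝ)
    (ha_meas : ∀ i j, Measurable (a i j))
    (ha_locbdd : ∀ i j, ∀ K : Set (Pt n), IsCompact K → K ⊆ halfSpace n →
      ∃ M, ∀ p ∈ K, |a i j p| ≤ M)
    (ha_symm : ∀ i j, ∀ᵐ p ∂(volume.restrict (halfSpace n)), a i j p = a j i p)
    (hA_meas : Measurable A)
    (hA_nonneg : ∀ p, 0 ≤ A p)
    (hA_locbdd : ∀ K : Set (Pt n), IsCompact K → K ⊆ halfSpace n →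
      ∃ M, ∀ p ∈ K, A p ≤ M)
    (hform : ∀ᵐ p ∂(volume.restrict (halfSpace n)), ∀ ξ : Xn n,
      0 ≤ ∑ i, ∑ j, a i j p * ξ i * ξ j ∧
      ∑ i, ∑ j, a i j p * ξ i * ξ j ≤ A p * ‖ξ‖ ^ 2)
    -- the coefficients are globally bounded in `S`
    (ha_bdd : ∃ M : ℝ, 0 < M ∧ ∀ i j,
      ∀ᵐ p ∂(volume.restrict (halfSpace n)), |a i j p| ≤ M)
    (u v : Pt n → ℝ)
    (hu : ContDiffOn ℝ 1 u (halfSpace n)) (hv : ContDiffOn ℝ 1 v (halfSpace n))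
    (hu_int : LocallyIntegrableOn (fun p => |u p| ^ q) (halfSpace n) volume)
    (hv_int : LocallyIntegrableOn (fun p => |v p| ^ q) (halfSpace n) volume)
    (hsol : WeakSolPair a q u v)
    (huv : ∀ p ∈ halfSpace n, v p ≤ u p) :
    ∀ p ∈ halfSpace n, u p = v p := by
  obtain ⟨M, hM, hMb⟩ := ha_bdd
  have hS := isOpen_halfSpace n
  have hSm := measurableSet_halfSpace n
  set w : Pt n → ℝ := fun p => u p - v p with hwd
  set c : ℝ := (1 / 2 : ℝ) ^ q with hcd
  have hc : 0 < c := by positivity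
  have hw : ContDiffOn ℝ 1 w (halfSpace n) := hu.sub hv
  have hw0 : ∀ p ∈ halfSpace n, 0 ≤ w p := fun p hp => sub_nonneg.2 (huv p hp)
  have hcT : ∀ f : Pt n → ℝ, ContDiffOn ℝ 1 f (halfSpace n) →
      ContinuousOn (pdT f) (halfSpace n) := fun f hf =>
    (hf.continuousOn_fderiv_of_isOpen hS le_rfl).clm_apply continuousOn_const
  have hcX : ∀ f : Pt n → ℝ, ContDiffOn ℝ 1 f (halfSpace n) → ∀ j,
      ContinuousOn (pdX f j) (halfSpace n) := fun f hf j =>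
    (hf.continuousOn_fderiv_of_isOpen hS le_rfl).clm_apply continuousOn_const
  have hfd : ∀ p ∈ halfSpace n, fderiv ℝ w p = fderiv ℝ u p - fderiv ℝ v p := fun p hp =>
    fderiv_sub ((hu.contDiffAt (hS.mem_nhds hp)).differentiableAt one_ne_zero)
      ((hv.contDiffAt (hS.mem_nhds hp)).differentiableAt one_ne_zero)
  have hwT : ∀ p ∈ halfSpace n, pdT w p = pdT u p - pdT v p := fun p hp => by
    simp [pdT, hfd p hp]
  have hwX : ∀ p ∈ halfSpace n, ∀ j, pdX w j p = pdX u j p - pdX v j p := fun p hp j => by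
    simp [pdX, hfd p hp]
  have hloc : ∀ f : Pt n → ℝ, ContDiffOn ℝ 1 f (halfSpace n) → ∀ i,
      LocallyIntegrableOn (fun p => ∑ j, a i j p * pdX f j p) (halfSpace n) volume :=
    fun f hf i => by
      rw [locallyIntegrableOn_iff hS.isLocallyClosed]
      intro K hK hKc
      apply integrable_finsetSum
      intro j _
      exact (coef_locInt (ha_meas i j) (ha_locbdd i j) (hcX f hf j)).integrableOn_compact_subset
        hK hKc
  have hwqc : ContinuousOn (fun p => w p ^ q) (halfSpace n) :=
    hw.continuousOn.rpow_const (fun p _ => Or.inr (by linarith))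
  have hg0 : LocallyIntegrableOn (fun p => pdT w p - c * w p ^ q) (halfSpace n) volume :=
    ((hcT w hw).sub (continuousOn_const.mul hwqc)).locallyIntegrableOn hSm
  have hsm : ∀ φ : Pt n → ℝ, ContDiff ℝ (⊤ : ℕ∞) φ → HasCompactSupport φ →
      tsupport φ ⊆ halfSpace n → (∀ p, 0 ≤ φ p) →
      0 ≤ ∫ p in halfSpace n, ((pdT w p - c * w p ^ q) * φ p +
        ∑ i, (∑ j, a i j p * pdX w j p) * pdX φ i p) := by
    intro φ hφ hφc hφs hφ0
    have hφ1 : ContDiff ℝ 1 φ := hφ.of_le (by exact_mod_cast le_top)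
    have hXc : ∀ i, Continuous (pdX φ i) := fun i =>
      (hφ1.continuous_fderiv one_ne_zero).clm_apply continuous_const
    have htX : ∀ i, tsupport (pdX φ i) ⊆ tsupport φ := fun i => by
      refine (closure_minimal ?_ (isClosed_tsupport _)).trans (tsupport_fderiv_subset ℝ)
      intro p hp
      apply subset_tsupport
      intro h
      apply hp
      simp [pdX, h]
    have iA : ∀ f : Pt n → ℝ, ContDiffOn ℝ 1 f (halfSpace n) →
        Integrable (fun p => ∑ i, (∑ j, a i j p * pdX f j p) * pdX φ i p) volume := fun f hf => by
      apply integrable_finsetSum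
      intro i _
      exact locInt_mul (hloc f hf i) (hXc i).continuousOn
        (hφc.of_isClosed_subset (isClosed_tsupport _) (htX i)) ((htX i).trans hφs)
    have iF : ∀ f : Pt n → ℝ, ContDiffOn ℝ 1 f (halfSpace n) →
        Integrable (fun p => pdT f p * φ p + ∑ i, ∑ j, a i j p * pdX φ i p * pdX f j p
          - oddPow q (f p) * φ p) volume := fun f hf => by
      have h1 : Integrable (fun p => pdT f p * φ p) volume :=
        locInt_mul ((hcT f hf).locallyIntegrableOn hSm) hφ1.continuous.continuousOn hφc hφs
      have h2 : Integrable (fun p => oddPow q (f p) * φ p) volume :=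
        locInt_mul (((oddPow_cont hq1).comp_continuousOn hf.continuousOn).locallyIntegrableOn hSm)
          hφ1.continuous.continuousOn hφc hφs
      have h3 : Integrable (fun p => ∑ i, ∑ j, a i j p * pdX φ i p * pdX f j p) volume := by
        refine (iA f hf).congr (Eventually.of_forall fun p => ?_)
        refine Finset.sum_congr rfl fun i _ => ?_
        rw [Finset.sum_mul]
        exact Finset.sum_congr rfl fun j _ => by ring
      exact (h1.add h3).sub h2
    have iW : Integrable (fun p => (pdT w p - c * w p ^ q) * φ p +
        ∑ i, (∑ j, a i j p * pdX w j p) * pdX φ i p) volume :=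
      (locInt_mul hg0 hφ1.continuous.continuousOn hφc hφs).add (iA w hw)
    have h := hsol φ hφ hφc hφs hφ0
    have h' := sub_nonneg.2 h
    rw [← integral_sub (iF u hu).restrict (iF v hv).restrict] at h'
    refine h'.trans (integral_mono_ae ((iF u hu).sub (iF v hv)).restrict iW.restrict ?_)
    filter_upwards [ae_restrict_mem hSm] with p hp
    have e1 : ∑ i, (∑ j, a i j p * pdX w j p) * pdX φ i p =
        ∑ i, ∑ j, a i j p * pdX φ i p * pdX u j p - ∑ i, ∑ j, a i j p * pdX φ i p * pdX v j p := by
      rw [← Finset.sum_sub_distrib]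
      refine Finset.sum_congr rfl fun i _ => ?_
      rw [Finset.sum_mul, ← Finset.sum_sub_distrib]
      refine Finset.sum_congr rfl fun j _ => ?_
      rw [hwX p hp j]; ring
    have e2 : c * w p ^ q ≤ oddPow q (u p) - oddPow q (v p) := oddPow_sub_ge hq1 (huv p hp)
    have e3 := mul_le_mul_of_nonneg_right e2 (hφ0 p)
    rw [e1, hwT p hp]
    linarith
  have hfinal := liouville_core hn hq1 hq2 hc hM a ha_symm
    (by filter_upwards [hform] with p hp ξ using (hp ξ).1) hMb w hw hw0 (hloc w hw)
    (fun φ h1 h2 h3 h4 => weak_ext _ _ hg0 (hloc w hw) hsm φ h1 h2 h3 h4)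
  intro p hp
  have := hfinal p hp
  simp only [hwd] at this
  linarith
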